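/- arXiv:2005.09287 — 2 statements merged into one kernel-verified Lean document; each statement's English description precedes it below -/
import Mathlib

section
/- For γ = 0 the logarithmic rate in the Reconstruction Theorem is optimal: consider the germ F_x(y) := log(1 + 1/|y−x|) on ℝ^d. This germ is (α,0)-coherent for every α < 0, yet there exists no distribution f ∈ D' such that |(f − F_x)(ψ_x^λ)| = o(log(1+1/λ)) as λ ↓ 0, uniformly for x in a ball B(0,2), where ψ is any fixed nonnegative test function with ψ(0) > 0 and ∫ψ = 1. -/
open MeasureTheory Metric Set Filter

noncomputable section

abbrev Ed (d : ℕ) := EuclideanSpace ℝ (Fin d)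

/-- Test functions: smooth compactly supported functions on ℝ^d. -/
def IsTestFunction {d : ℕ} (φ : Ed d → ℝ) : Prop :=
  ContDiff ℝ (⊤ : ℕ∞) φ ∧ HasCompactSupport φ

/-- The scaled test function `φ_x^λ(z) = λ^{-d} φ(λ⁻¹(z - x))`. -/
def scaled {d : ℕ} (φ : Ed d → ℝ) (x : Ed d) (l : ℝ) : Ed d → ℝ :=
  fun z => (l ^ d)⁻¹ * φ (l⁻¹ • (z - x))

/-- The `C^r` norm: sup of the norms of the iterated derivatives of order ≤ r. -/
def Cnorm {d : ℕ} (r : ℕ) (φ : Ed d → ℝ) : ℝ :=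
  ⨆ i : Fin (r + 1), ⨆ x : Ed d, ‖iteratedFDeriv ℝ (i : ℕ) φ x‖

/-- The family `B_r` of test functions supported in `B(0,1)` with `C^r` norm at most 1. -/
def Br {d : ℕ} (r : ℕ) (ψ : Ed d → ℝ) : Prop :=
  IsTestFunction ψ ∧ tsupport ψ ⊆ closedBall (0 : Ed d) 1 ∧ Cnorm r ψ ≤ 1

/-- A linear functional is a distribution if on every compact set it is bounded
by some `C^r` norm. -/
def IsDistribution {d : ℕ} (T : (Ed d → ℝ) →ₗ[ℝ] ℝ) : Prop :=
  ∀ K : Set (Ed d), IsCompact K → ∃ r : ℕ, ∃ C : ℝ,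
    ∀ φ : Ed d → ℝ, IsTestFunction φ → tsupport φ ⊆ K → |T φ| ≤ C * Cnorm r φ

/-- A germ: a measurable family of distributions. -/
def IsGerm {d : ℕ} (F : Ed d → ((Ed d → ℝ) →ₗ[ℝ] ℝ)) : Prop :=
  (∀ x, IsDistribution (F x)) ∧
  ∀ ψ : Ed d → ℝ, IsTestFunction ψ → Measurable fun x => F x ψ

/-- Monomial `y^k` for a multi-index `k`. -/
def mono {d : ℕ} (k : Fin d → ℕ) (y : Ed d) : ℝ := ∏ i, (y i) ^ (k i)

/-- Convolution of two functions. -/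
def conv {d : ℕ} (f g : Ed d → ℝ) : Ed d → ℝ := fun x => ∫ y, f (x - y) * g y

/-- `rIndex α` is the smallest integer `r > -α` (for `α ≤ 0`). -/
def rIndex (α : ℝ) : ℕ := Nat.floor (-α) + 1

/-- Negative Hölder space condition `T ∈ C^α` for `α ≤ 0`. -/
def HolderNeg {d : ℕ} (α : ℝ) (T : (Ed d → ℝ) →ₗ[ℝ] ℝ) : Prop :=
  ∀ K : Set (Ed d), IsCompact K → ∃ C : ℝ, ∀ x ∈ K, ∀ ε ∈ Set.Ioc (0:ℝ) 1,
    ∀ ψ : Ed d → ℝ, Br (rIndex α) ψ → |T (scaled ψ x ε)| ≤ C * ε ^ α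

/-- `(α,γ)`-coherence of a germ with respect to the test function φ. -/
def AlphaGammaCoherent {d : ℕ} (α γ : ℝ) (F : Ed d → ((Ed d → ℝ) →ₗ[ℝ] ℝ))
    (φ : Ed d → ℝ) : Prop :=
  ∀ K : Set (Ed d), IsCompact K → ∃ C : ℝ, ∀ y ∈ K, ∀ z ∈ K, ∀ ε ∈ Set.Ioc (0:ℝ) 1,
    |F z (scaled φ y ε) - F y (scaled φ y ε)| ≤ C * ε ^ α * (‖z - y‖ + ε) ^ (γ - α)

/-- Global homogeneity bound β for a germ with respect to the test function φ. -/
def HomBound {d : ℕ} (β : ℝ) (F : Ed d → ((Ed d → ℝ) →ₗ[ℝ] ℝ)) (φ : Ed d → ℝ) : Prop :=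
  ∀ K : Set (Ed d), IsCompact K → ∃ C : ℝ, ∀ x ∈ K, ∀ ε ∈ Set.Ioc (0:ℝ) 1,
    |F x (scaled φ x ε)| ≤ C * ε ^ β

def gl (u : ℝ) : ℝ := max 0 (-Real.log u)

lemma gl_nonneg (u : ℝ) : 0 ≤ gl u := le_max_left _ _

lemma gl_measurable : Measurable gl := by
  unfold gl; fun_prop

lemma gl_integrable {d : ℕ} (hd : 0 < d) : Integrable (fun v : Ed d => gl ‖v‖) := by
  have : Nonempty (Fin d) := ⟨⟨0, hd⟩⟩
  have : Nontrivial (Ed d) := inferInstance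
  rw [integrable_fun_norm_addHaar (volume : Measure (Ed d)) (f := gl)]
  rw [← Ioc_union_Ioi_eq_Ioi (zero_le_one' ℝ), integrableOn_union]
  constructor
  · have h1 : IntegrableOn Real.log (Ioc 0 1) :=
      (intervalIntegrable_iff_integrableOn_Ioc_of_le zero_le_one).1
        intervalIntegral.intervalIntegrable_log'
    refine Integrable.mono h1 ?_ ?_
    · have := gl_measurable
      exact (by fun_prop : Measurable _).aestronglyMeasurable
    · refine (ae_restrict_iff' measurableSet_Ioc).2 (ae_of_all _ fun y hy => ?_)
      rw [norm_smul, norm_pow, Real.norm_of_nonneg hy.1.le, Real.norm_of_nonneg (gl_nonneg y)]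
      have h2 : gl y ≤ ‖Real.log y‖ := max_le (norm_nonneg _) (neg_le_abs _)
      have h3 := pow_le_one₀ (n := Module.finrank ℝ (Ed d) - 1) hy.1.le hy.2
      calc _ ≤ 1 * gl y := mul_le_mul_of_nonneg_right h3 (gl_nonneg y)
        _ ≤ _ := by simpa using h2
  · refine (integrableOn_zero).congr_fun (fun y hy => ?_) measurableSet_Ioi
    have : gl y = 0 := max_eq_left (by have := Real.log_nonneg (le_of_lt hy); linarith)
    simp [this]

lemma log_le_gl {u : ℝ} (hu : 0 ≤ u) : Real.log (1 + u⁻¹) ≤ Real.log 2 + gl u := by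
  rcases hu.eq_or_lt with rfl | hu
  · have := Real.log_nonneg one_le_two; simpa using add_nonneg this (gl_nonneg 0)
  rcases le_total 1 u with h | h
  · have : Real.log (1 + u⁻¹) ≤ Real.log 2 :=
      Real.log_le_log (by positivity) (by have := inv_le_one_of_one_le₀ h; linarith)
    linarith [gl_nonneg u]
  · have h1 : 1 ≤ u⁻¹ := (one_le_inv₀ hu).2 h
    have : Real.log (1 + u⁻¹) ≤ Real.log (2 * u⁻¹) :=
      Real.log_le_log (by positivity) (by linarith)
    rw [Real.log_mul (by norm_num) (by positivity), Real.log_inv] at this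
    linarith [le_max_right 0 (-Real.log u), show gl u = max 0 (-Real.log u) from rfl]

lemma test_bound {d : ℕ} {φ : Ed d → ℝ} (h : IsTestFunction φ) : ∃ M, 0 ≤ M ∧ ∀ v, |φ v| ≤ M := by
  obtain ⟨C, hC⟩ := h.2.exists_bound_of_continuous h.1.continuous
  exact ⟨C, (norm_nonneg _).trans (hC 0), hC⟩

lemma test_scaled {d : ℕ} {φ : Ed d → ℝ} (h : IsTestFunction φ) (x : Ed d) {l : ℝ} (hl : 0 < l) :
    IsTestFunction (scaled φ x l) := by
  refine ⟨?_, ?_⟩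
  · unfold scaled
    exact contDiff_const.mul (h.1.comp ((contDiff_id.sub contDiff_const).const_smul l⁻¹))
  · unfold scaled
    have h2 : HasCompactSupport (fun z => φ (l⁻¹ • (z - x))) := by
      have := h.2.comp_homeomorph ((Homeomorph.addRight (-x)).trans
        (Homeomorph.smulOfNeZero l⁻¹ (inv_ne_zero hl.ne')))
      convert this using 1
      ext z
      simp [sub_eq_add_neg]
    exact h2.mul_left

lemma test_integrable {d : ℕ} {φ : Ed d → ℝ} (h : IsTestFunction φ) : Integrable φ :=
  h.1.continuous.integrable_of_hasCompactSupport h.2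

lemma gl_mul_integrable {d : ℕ} (hd : 0 < d) {φ : Ed d → ℝ} (h : IsTestFunction φ) (x : Ed d)
    {l : ℝ} (hl : 0 < l) :
    Integrable (fun v => gl (‖v - x‖ / l) * φ v) := by
  obtain ⟨M, hM, hb⟩ := test_bound h
  have h1 : Integrable (fun v : Ed d => gl (‖v - x‖ / l)) := by
    have := ((gl_integrable hd).comp_smul (inv_ne_zero hl.ne')).comp_sub_right x
    convert this using 2 with v
    rw [norm_smul, norm_inv, Real.norm_of_nonneg hl.le, div_eq_inv_mul]
  exact h1.mul_bdd h.1.continuous.aestronglyMeasurable (ae_of_all _ hb)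

lemma gl_scaled_integral {d : ℕ} (hd : 0 < d) {φ : Ed d → ℝ} (h : IsTestFunction φ) (x y : Ed d)
    {l : ℝ} (hl : 0 < l) {M : ℝ} (hM : ∀ v, |φ v| ≤ M) :
    ∫ v, gl (‖v - x‖ / l) * scaled φ y l v ≤ M * ∫ v : Ed d, gl ‖v‖ := by
  have e : ∀ v, gl (‖v - x‖ / l) = gl ‖l⁻¹ • (v - x)‖ := fun v => by
    rw [norm_smul, norm_inv, Real.norm_of_nonneg hl.le, div_eq_inv_mul]
  have h1 : Integrable (fun v : Ed d => gl ‖l⁻¹ • (v - x)‖) := 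
    ((gl_integrable hd).comp_smul (inv_ne_zero hl.ne')).comp_sub_right x
  calc _ ≤ ∫ v, (l ^ d)⁻¹ * M * gl ‖l⁻¹ • (v - x)‖ := by
        refine integral_mono (gl_mul_integrable hd (test_scaled h y hl) x hl) (h1.const_mul _) ?_
        intro v
        simp only [e]
        unfold scaled
        have := (le_abs_self _).trans (hM (l⁻¹ • (v - y)))
        have h3 : 0 ≤ (l^d)⁻¹ := by positivity
        have := mul_le_mul_of_nonneg_left this h3
        nlinarith [gl_nonneg ‖l⁻¹ • (v - x)‖]
    _ = (l ^ d)⁻¹ * M * ∫ v, gl ‖l⁻¹ • v‖ := by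
        rw [integral_const_mul, integral_sub_right_eq_self (fun v => gl ‖l⁻¹ • v‖) x]
    _ = _ := by
        rw [Measure.integral_comp_inv_smul_of_nonneg volume (fun v : Ed d => gl ‖v‖) hl.le]
        simp
        field_simp

lemma integral_scaled {d : ℕ} (φ : Ed d → ℝ) (y : Ed d)
    {l : ℝ} (hl : 0 < l) :
    ∫ v, scaled φ y l v = ∫ v, φ v := by
  unfold scaled
  rw [integral_const_mul, integral_sub_right_eq_self (fun v => φ (l⁻¹ • v)) y,
    Measure.integral_comp_inv_smul_of_nonneg volume φ hl.le]
  simp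
  field_simp

lemma log_mul_integrable {d : ℕ} (hd : 0 < d) {φ : Ed d → ℝ} (h : IsTestFunction φ) (x : Ed d) :
    Integrable (fun v => Real.log (1 + ‖v - x‖⁻¹) * φ v) := by
  have h1 := (gl_mul_integrable hd h x one_pos).norm
  have h2 := ((test_integrable h).const_mul (Real.log 2)).norm
  refine (h2.add h1).mono' ?_ (ae_of_all _ fun v => ?_)
  · have := h.1.continuous
    exact (by fun_prop : Measurable _).aestronglyMeasurable
  · simp only [Pi.add_apply, norm_mul, ← add_mul, div_one]
    refine mul_le_mul_of_nonneg_right ?_ (norm_nonneg _)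
    have h3 := log_le_gl (norm_nonneg (v - x))
    rw [Real.norm_of_nonneg (Real.log_nonneg (by simp)), Real.norm_of_nonneg (gl_nonneg _),
      Real.norm_of_nonneg (Real.log_nonneg one_le_two)]
    exact h3

/-- pointwise estimate -/
lemma pointwise {ε s t A : ℝ} (hε : 0 < ε) (hε1 : ε ≤ 1) (hs : 0 < s) (ht : 0 < t) (ht1 : t ≤ 1)
    (hA : |s - t| ≤ A) :
    |Real.log (1 + (ε * s)⁻¹) - Real.log (1 + (ε * t)⁻¹)| ≤
      gl s + gl t + (2 * Real.log (1 + A) + 1) := by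
  have hA0 : 0 ≤ A := (abs_nonneg _).trans hA
  obtain ⟨h1, h2⟩ := abs_le.1 hA
  have e : ∀ u : ℝ, 0 < u → Real.log (1 + (ε * u)⁻¹) =
      Real.log (1 + ε * u) - Real.log ε - Real.log u := by
    intro u hu
    have : 1 + (ε * u)⁻¹ = (1 + ε * u) / (ε * u) := by field_simp; ring
    rw [this, Real.log_div (by positivity) (by positivity), Real.log_mul hε.ne' hu.ne']
    ring
  rw [e s hs, e t ht]
  have k1 : ∀ u w : ℝ, 0 < u → 0 < w → u ≤ w + A →
      Real.log (1 + ε * u) ≤ Real.log (1 + ε * w) + Real.log (1 + A) := by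
    intro u w hu hw huw
    rw [← Real.log_mul (by positivity) (by positivity)]
    apply Real.log_le_log (by positivity)
    nlinarith [mul_le_mul_of_nonneg_left huw hε.le, mul_le_mul_of_nonneg_right hε1 hA0,
      mul_nonneg (mul_pos hε hw).le hA0]
  have k2 := k1 s t hs ht (by linarith)
  have k3 := k1 t s ht hs (by linarith)
  have k4 : Real.log t ≤ 0 := Real.log_nonpos ht.le ht1
  have k5 : -Real.log t ≤ gl t := le_max_right _ _
  have k6 : -Real.log s ≤ gl s := le_max_right _ _
  have k7 : Real.log s ≤ 1 + Real.log (1 + A) := by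
    have : Real.log s ≤ Real.log (2 * (1 + A)) := Real.log_le_log hs (by linarith)
    rw [Real.log_mul (by norm_num) (by positivity)] at this
    linarith [Real.log_two_lt_d9]
  have k8 : 0 ≤ Real.log (1 + A) := Real.log_nonneg (by linarith)
  have k9 := gl_nonneg s
  have k10 := gl_nonneg t
  rw [abs_le]
  constructor <;> linarith

lemma coherent {d : ℕ} (hd : 0 < d) (F : Ed d → ((Ed d → ℝ) →ₗ[ℝ] ℝ))
    (hF : ∀ (x : Ed d) (ψ : Ed d → ℝ), IsTestFunction ψ →
      F x ψ = ∫ y, Real.log (1 + ‖y - x‖⁻¹) * ψ y) (α : ℝ) (hα : α < 0) (φ : Ed d → ℝ)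
    (hφ : IsTestFunction φ) (hs : tsupport φ ⊆ closedBall (0 : Ed d) 1) (h0 : ∀ z, 0 ≤ φ z) :
    AlphaGammaCoherent α 0 F φ := by
  have : Nonempty (Fin d) := ⟨⟨0, hd⟩⟩
  have : Nontrivial (Ed d) := inferInstance
  obtain ⟨M, hM, hb⟩ := test_bound hφ
  intro K _
  set G := ∫ v : Ed d, gl ‖v‖ with hG
  have hG0 : 0 ≤ G := integral_nonneg fun v => gl_nonneg _
  set I := ∫ v, φ v with hI
  have hI0 : 0 ≤ I := integral_nonneg h0
  refine ⟨2 * M * G + (2 / (-α) + 1) * I, fun y _ z _ ε hε => ?_⟩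
  have hε0 := hε.1
  have hT := test_scaled hφ y hε0
  have hn : ∀ v, 0 ≤ scaled φ y ε v := fun v => mul_nonneg (by positivity) (h0 _)
  set A := ‖z - y‖ / ε with hA
  have hA0 : 0 ≤ A := by positivity
  set P := (1 + A) ^ (-α) with hP
  have hP1 : 1 ≤ P := Real.one_le_rpow (by linarith) (by linarith)
  have hlog : Real.log (1 + A) ≤ P / (-α) := Real.log_le_rpow_div (by linarith) (by linarith)
  have hPe : ε ^ α * (‖z - y‖ + ε) ^ (0 - α) = P := by
    have : 1 + A = (‖z - y‖ + ε) / ε := by rw [hA]; field_simp; ring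
    rw [hP, this, Real.div_rpow (by positivity) hε0.le, zero_sub, Real.rpow_neg hε0.le α]
    field_simp
  rw [mul_assoc, hPe, hF z _ hT, hF y _ hT, ← integral_sub (log_mul_integrable hd hT z)
    (log_mul_integrable hd hT y)]
  have i1 := gl_mul_integrable hd hT z hε0
  have i2 := gl_mul_integrable hd hT y hε0
  have i3 := (test_integrable hT).const_mul (2 * Real.log (1 + A) + 1)
  have key : |∫ v, (Real.log (1 + ‖v - z‖⁻¹) * scaled φ y ε v -
      Real.log (1 + ‖v - y‖⁻¹) * scaled φ y ε v)| ≤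
      ∫ v, (gl (‖v - z‖ / ε) * scaled φ y ε v + gl (‖v - y‖ / ε) * scaled φ y ε v +
        (2 * Real.log (1 + A) + 1) * scaled φ y ε v) := by
    rw [← Real.norm_eq_abs]
    refine norm_integral_le_of_norm_le ((i1.add i2).add i3) ?_
    filter_upwards [Measure.ae_ne volume y, Measure.ae_ne volume z] with v hvy hvz
    rw [← sub_mul, ← add_mul, ← add_mul, norm_mul, Real.norm_of_nonneg (hn v), Real.norm_eq_abs]
    by_cases hz : scaled φ y ε v = 0
    · simp [hz]
    refine mul_le_mul_of_nonneg_right ?_ (hn v)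
    have hsup : ‖v - y‖ / ε ≤ 1 := by
      have : φ (ε⁻¹ • (v - y)) ≠ 0 := fun h => hz (by simp [scaled, h])
      have := hs (subset_tsupport _ this)
      rw [mem_closedBall_zero_iff, norm_smul, norm_inv, Real.norm_of_nonneg hε0.le] at this
      rwa [div_eq_inv_mul]
    have p1 : 0 < ‖v - y‖ := norm_pos_iff.2 (sub_ne_zero.2 hvy)
    have p2 : 0 < ‖v - z‖ := norm_pos_iff.2 (sub_ne_zero.2 hvz)
    have := pointwise (ε := ε) (s := ‖v - z‖ / ε) (t := ‖v - y‖ / ε) (A := A) hε0 hε.2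
      (by positivity) (by positivity) hsup (by
        rw [← sub_div, abs_div, abs_of_pos hε0, hA]
        gcongr
        have := abs_norm_sub_norm_le (v - z) (v - y)
        rw [norm_sub_rev z y]
        simpa using this)
    rwa [mul_div_cancel₀ _ hε0.ne', mul_div_cancel₀ _ hε0.ne'] at this
  refine key.trans ?_
  rw [integral_add (f := fun v => gl (‖v - z‖ / ε) * scaled φ y ε v + gl (‖v - y‖ / ε) * scaled φ y ε v)
    (i1.add i2) i3, integral_add i1 i2, integral_const_mul, integral_scaled _ _ hε0]
  have j1 := gl_scaled_integral hd hφ z y hε0 hb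
  have j2 := gl_scaled_integral hd hφ y y hε0 hb
  have j3 : (2 * Real.log (1 + A) + 1) * I ≤ (2 / (-α) + 1) * I * P := by
    have : 2 * Real.log (1 + A) + 1 ≤ (2 / (-α) + 1) * P := by
      have : (2 / (-α) + 1) * P = 2 * (P / (-α)) + P := by ring
      linarith
    nlinarith [mul_le_mul_of_nonneg_right this hI0]
  have j4 : 2 * M * G ≤ 2 * M * G * P := le_mul_of_one_le_right (by positivity) hP1
  rw [← hG] at j1 j2
  linarith

lemma F_lower {d : ℕ} (hd : 0 < d) {ψ : Ed d → ℝ} (h : IsTestFunction ψ) (h0 : ∀ z, 0 ≤ ψ z)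
    (h1 : ∫ x, ψ x = 1) {R : ℝ} (hR : 1 ≤ R) (hs : tsupport ψ ⊆ closedBall (0 : Ed d) R)
    (x : Ed d) {l : ℝ} (hl : 0 < l) :
    Real.log (1 + 1 / l) - Real.log R ≤ ∫ y, Real.log (1 + ‖y - x‖⁻¹) * scaled ψ x l y := by
  have : Nonempty (Fin d) := ⟨⟨0, hd⟩⟩
  have : Nontrivial (Ed d) := inferInstance
  have hT := test_scaled h x hl
  have hn : ∀ v, 0 ≤ scaled ψ x l v := fun v => mul_nonneg (by positivity) (h0 _)
  have e : Real.log (1 + 1 / l) - Real.log R =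
      ∫ y, (Real.log (1 + 1 / l) - Real.log R) * scaled ψ x l y := by
    rw [integral_const_mul, integral_scaled _ _ hl, h1, mul_one]
  rw [e]
  refine integral_mono_ae ((test_integrable hT).const_mul _) (log_mul_integrable hd hT x) ?_
  filter_upwards [Measure.ae_ne volume x] with v hv
  by_cases hz : scaled ψ x l v = 0
  · simp [hz]
  refine mul_le_mul_of_nonneg_right ?_ (hn v)
  have hsup : ‖v - x‖ ≤ l * R := by
    have : ψ (l⁻¹ • (v - x)) ≠ 0 := fun h => hz (by simp [scaled, h])
    have := hs (subset_tsupport _ this)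
    rw [mem_closedBall_zero_iff, norm_smul, norm_inv, Real.norm_of_nonneg hl.le] at this
    rwa [inv_mul_le_iff₀ hl] at this
  have p1 : 0 < ‖v - x‖ := norm_pos_iff.2 (sub_ne_zero.2 hv)
  rw [← Real.log_div (by positivity) (by positivity)]
  apply Real.log_le_log (by positivity)
  have : (l * R)⁻¹ ≤ ‖v - x‖⁻¹ := inv_anti₀ p1 hsup
  have h3 : (1 + 1 / l) / R = R⁻¹ + (l * R)⁻¹ := by field_simp
  have h4 : R⁻¹ ≤ 1 := inv_le_one_of_one_le₀ hR
  linarith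

lemma iter_test {d : ℕ} {φ : Ed d → ℝ} (h : IsTestFunction φ) (i : ℕ) :
    ContDiff ℝ (⊤ : ℕ∞) (iteratedFDeriv ℝ i φ) ∧ HasCompactSupport (iteratedFDeriv ℝ i φ) := by
  refine ⟨h.1.iteratedFDeriv_right (m := (⊤ : ℕ∞)) le_rfl, h.2.iteratedFDeriv i⟩

lemma isometry_integral {V X Y : Type*} [NormedAddCommGroup X] [NormedSpace ℝ X]
    [NormedAddCommGroup Y] [NormedSpace ℝ Y] [MeasurableSpace V] (μ : Measure V)
    (L : X ≃ₗᵢ[ℝ] Y) (g : V → X) (c : V → ℝ) :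
    ∫ t, c t • L (g t) ∂μ = L (∫ t, c t • g t ∂μ) := by
  have := L.toContinuousLinearEquiv.integral_comp_comm (μ := μ) (fun t => c t • g t)
  simpa using this

lemma iter_conv {d : ℕ} {η ψ : Ed d → ℝ} (hη : Continuous η) (hψ : IsTestFunction ψ) (i : ℕ) :
    iteratedFDeriv ℝ i (fun z => ∫ t, η t • ψ (z - t)) =
      fun z => ∫ t, η t • iteratedFDeriv ℝ i ψ (z - t) := by
  induction i with
  | zero =>
    ext z m
    simp only [iteratedFDeriv_zero_eq_comp, Function.comp]
    have := ((continuousMultilinearCurryFin0 ℝ (Ed d) ℝ).symm.toContinuousLinearEquiv.integral_comp_comm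
      (μ := volume) (fun t => η t • ψ (z - t)))
    simp only [LinearIsometryEquiv.coe_toContinuousLinearEquiv, map_smul] at this
    rw [this]
  | succ i ih =>
    rw [iteratedFDeriv_succ_eq_comp_left, ih, iteratedFDeriv_succ_eq_comp_left]
    obtain ⟨h1, h2⟩ := iter_test hψ i
    ext1 z
    have key := (h2.hasFDerivAt_convolution_right (ContinuousLinearMap.lsmul ℝ ℝ)
      (hη.locallyIntegrable (μ := volume)) (h1.of_le (by simp)) z).fderiv
    have e1 : (convolution η (iteratedFDeriv ℝ i ψ) (ContinuousLinearMap.lsmul ℝ ℝ) volume) =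
      fun z => ∫ t, η t • iteratedFDeriv ℝ i ψ (z - t) := rfl
    rw [e1] at key
    replace key : fderiv ℝ (fun z => ∫ t, η t • iteratedFDeriv ℝ i ψ (z - t)) z =
      ∫ t, η t • fderiv ℝ (iteratedFDeriv ℝ i ψ) (z - t) := key
    simp only [Function.comp]
    rw [key]
    exact (isometry_integral (X := Ed d →L[ℝ] ContinuousMultilinearMap ℝ (fun _ : Fin i => Ed d) ℝ)
      (Y := ContinuousMultilinearMap ℝ (fun _ : Fin (i + 1) => Ed d) ℝ) volume
      (continuousMultilinearCurryLeftEquiv ℝ (fun _ : Fin (i + 1) => Ed d) ℝ).symm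
      (fun t => fderiv ℝ (iteratedFDeriv ℝ i ψ) (z - t)) η).symm

lemma iter_conv_swap {d : ℕ} {η ψ : Ed d → ℝ} (hη : IsTestFunction η) (hψ : IsTestFunction ψ)
    (i : ℕ) (z : Ed d) :
    ∫ t, η t • iteratedFDeriv ℝ i ψ (z - t) = ∫ t, ψ t • iteratedFDeriv ℝ i η (z - t) := by
  have h1 := congrFun (iter_conv hη.1.continuous hψ i) z
  have h2 := congrFun (iter_conv hψ.1.continuous hη i) z
  rw [← h1, ← h2]
  congr 1
  ext z
  rw [← integral_sub_left_eq_self _ volume z]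
  simp [mul_comm]

def Yr (d r : ℕ) := ∀ i : Fin (r + 1),
  BoundedContinuousFunction (Ed d) (ContinuousMultilinearMap ℝ (fun _ : Fin (i : ℕ) => Ed d) ℝ)

instance (d r : ℕ) : NormedAddCommGroup (Yr d r) := Pi.normedAddCommGroup

instance (d r : ℕ) : NormedSpace ℝ (Yr d r) := Pi.normedSpace

instance (d r : ℕ) : CompleteSpace (Yr d r) :=
  inferInstanceAs (CompleteSpace (∀ i : Fin (r + 1),
    BoundedContinuousFunction (Ed d) (ContinuousMultilinearMap ℝ (fun _ : Fin (i : ℕ) => Ed d) ℝ)))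

lemma Yr_norm_apply_le {d r : ℕ} (y : Yr d r) (i : Fin (r + 1)) (z : Ed d) : ‖y i z‖ ≤ ‖y‖ :=
  ((y i).norm_coe_le_norm z).trans (norm_le_pi_norm (G := fun i : Fin (r + 1) =>
    BoundedContinuousFunction (Ed d) (ContinuousMultilinearMap ℝ (fun _ : Fin (i : ℕ) => Ed d) ℝ)) y i)

/-- evaluation -/
def Yr_eval {d r : ℕ} (i : Fin (r + 1)) (z : Ed d) :
    Yr d r →L[ℝ] ContinuousMultilinearMap ℝ (fun _ : Fin (i : ℕ) => Ed d) ℝ :=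
  LinearMap.mkContinuous
    { toFun := fun y => y i z
      map_add' := fun _ _ => rfl
      map_smul' := fun _ _ => rfl } 1 (fun y => by simpa using Yr_norm_apply_le y i z)

lemma no_blowup {d : ℕ} {f : (Ed d → ℝ) →ₗ[ℝ] ℝ} (hf : IsDistribution f) {ψ : Ed d → ℝ}
    (hψ : IsTestFunction ψ) (h0 : ∀ z, 0 ≤ ψ z) (hi : ∫ x, ψ x = 1) :
    ∃ B : ℝ, ∀ l ∈ Ioc (0 : ℝ) 1, ∀ A : ℝ,
      (∀ x ∈ closedBall (0 : Ed d) 2, A ≤ f (scaled ψ x l)) → A ≤ B := by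
  obtain ⟨R, hR⟩ := hψ.2.isCompact.isBounded.subset_closedBall (0 : Ed d)
  obtain ⟨r, C, hC⟩ := hf (closedBall 0 (|R| + 2)) (isCompact_closedBall _ _)
  let bump : ContDiffBump (0 : Ed d) := ⟨1, 2, one_pos, one_lt_two⟩
  set η := bump.normed volume with hηdef
  have hη : IsTestFunction η := ⟨bump.contDiff_normed, bump.hasCompactSupport_normed⟩
  have hη0 : ∀ x, 0 ≤ η x := fun x => bump.nonneg_normed x
  have hη1 : ∫ x, η x = 1 := bump.integral_normed
  have hηs : ∀ x, η x ≠ 0 → x ∈ closedBall (0 : Ed d) 2 := by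
    intro x hx
    have := subset_tsupport _ hx
    rwa [hηdef, bump.tsupport_normed_eq] at this
  have hb : ∀ i : Fin (r + 1), ∃ b, ∀ x, ‖iteratedFDeriv ℝ (i : ℕ) η x‖ ≤ b := fun i =>
    (iter_test hη i).2.exists_bound_of_continuous (iter_test hη i).1.continuous
  choose b hb using hb
  have hb0 : ∀ i, 0 ≤ b i := fun i => (norm_nonneg _).trans (hb i 0)
  refine ⟨|C| * (∑ i, b i + 1), fun l hl A hA => ?_⟩
  have hl0 := hl.1
  set p := scaled ψ 0 l with hp
  have hpt : IsTestFunction p := test_scaled hψ 0 hl0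
  have hp0 : ∀ v, 0 ≤ p v := fun v => mul_nonneg (by positivity) (h0 _)
  have hp1 : ∫ v, p v = 1 := by rw [hp, integral_scaled _ _ hl0, hi]
  have hpx : ∀ x, scaled ψ x l = fun z => p (z - x) := by
    intro x; ext z; simp [hp, scaled]
  have hbd : ∀ i : ℕ, ∃ b, ∀ x, ‖iteratedFDeriv ℝ i p x‖ ≤ b := fun i =>
    (iter_test hpt i).2.exists_bound_of_continuous (iter_test hpt i).1.continuous
  choose c hc using hbd
  let J : Ed d → Yr d r := fun x i => BoundedContinuousFunction.ofNormedAddCommGroup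
    (fun z => iteratedFDeriv ℝ (i : ℕ) p (z - x))
    ((iter_test hpt i).1.continuous.comp (continuous_id.sub continuous_const)) (c i)
    (fun z => hc i _)
  have hJ : Continuous J := by
    refine continuous_pi fun i => ?_
    have hu : UniformContinuous (iteratedFDeriv ℝ (i : ℕ) p) :=
      (iter_test hpt i).2.uniformContinuous_of_continuous (iter_test hpt i).1.continuous
    rw [Metric.continuous_iff]
    intro x ε hε
    obtain ⟨δ, hδ, H⟩ := Metric.uniformContinuous_iff.1 hu (ε / 2) (half_pos hε)
    refine ⟨δ, hδ, fun y hy => ?_⟩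
    refine lt_of_le_of_lt ((BoundedContinuousFunction.dist_le (half_pos hε).le).2 fun z => ?_)
      (half_lt_self hε)
    refine (H ?_).le
    simpa [dist_eq_norm, norm_sub_rev] using hy
  let s : Set (Yr d r) := {y | ∃ φ : Ed d → ℝ, IsTestFunction φ ∧
    tsupport φ ⊆ closedBall 0 (|R| + 2) ∧ A ≤ f φ ∧
    ∀ i z, y i z = iteratedFDeriv ℝ (i : ℕ) φ z}
  have hsc : Convex ℝ s := by
    rintro y ⟨φ, h1, h2, h3, h4⟩ y' ⟨φ', h1', h2', h3', h4'⟩ a a' ha ha' haa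
    have t1 : ContDiff ℝ (⊤ : ℕ∞) (a • φ) := contDiff_const.smul h1.1
    have t2 : ContDiff ℝ (⊤ : ℕ∞) (a' • φ') := contDiff_const.smul h1'.1
    have u : tsupport (a • φ + a' • φ') ⊆ closedBall 0 (|R| + 2) := by
      refine (tsupport_add _ _).trans (union_subset ?_ ?_)
      · exact (closure_mono (Function.support_const_smul_subset a φ)).trans h2
      · exact (closure_mono (Function.support_const_smul_subset a' φ')).trans h2'
    refine ⟨a • φ + a' • φ', ⟨t1.add t2, ?_⟩, u, ?_, ?_⟩
    · exact HasCompactSupport.of_support_subset_isCompact (isCompact_closedBall _ _)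
        ((subset_tsupport _).trans u)
    · rw [map_add, map_smul, map_smul, smul_eq_mul, smul_eq_mul]
      have q1 := mul_le_mul_of_nonneg_left h3 ha
      have q2 := mul_le_mul_of_nonneg_left h3' ha'
      have q3 : a * A + a' * A = A := by rw [← add_mul, haa, one_mul]
      linarith
    · intro i z
      rw [iteratedFDeriv_add_apply (t1.of_le (by exact_mod_cast le_top)).contDiffAt
        (t2.of_le (by exact_mod_cast le_top)).contDiffAt,
        iteratedFDeriv_const_smul_apply (h1.1.of_le (by exact_mod_cast le_top)).contDiffAt,
        iteratedFDeriv_const_smul_apply (h1'.1.of_le (by exact_mod_cast le_top)).contDiffAt,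
        ← h4, ← h4']
      rfl
  have hJs : ∀ x, η x ≠ 0 → J x ∈ s := by
    intro x hx
    have hx2 := hηs x hx
    refine ⟨scaled ψ x l, test_scaled hψ x hl0, ?_, hA x hx2, ?_⟩
    · refine closure_minimal ?_ isClosed_closedBall
      intro v hv
      have : ψ (l⁻¹ • (v - x)) ≠ 0 := fun h => hv (by simp [scaled, h])
      have := hR (subset_tsupport _ this)
      rw [mem_closedBall_zero_iff, norm_smul, norm_inv, Real.norm_of_nonneg hl0.le,
        inv_mul_le_iff₀ hl0] at this
      rw [mem_closedBall_zero_iff] at hx2 ⊢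
      have h3 : l * R ≤ |R| := by
        calc l * R ≤ l * |R| := mul_le_mul_of_nonneg_left (le_abs_self R) hl0.le
          _ ≤ 1 * |R| := mul_le_mul_of_nonneg_right hl.2 (abs_nonneg R)
          _ = _ := one_mul _
      have h4 := norm_add_le (v - x) x
      rw [sub_add_cancel] at h4
      linarith
    · intro i z
      rw [hpx, iteratedFDeriv_comp_sub]
      rfl
  let w : Ed d → NNReal := fun x => (η x).toNNReal
  have hw : Measurable w := hη.1.continuous.measurable.real_toNNReal
  have hwη : ∀ x, (w x : ℝ) = η x := fun x => Real.coe_toNNReal _ (hη0 x)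
  let μ : Measure (Ed d) := volume.withDensity (fun x => (w x : ENNReal))
  have hμ : IsProbabilityMeasure μ := by
    constructor
    rw [withDensity_apply _ MeasurableSet.univ, Measure.restrict_univ]
    have := ofReal_integral_eq_lintegral_ofReal (test_integrable hη) (ae_of_all _ hη0)
    rw [hη1, ENNReal.ofReal_one] at this
    exact this.symm
  have hint : Integrable (fun x => η x • J x) := 
    (hη.1.continuous.smul hJ).integrable_of_hasCompactSupport hη.2.smul_right
  have hJi : Integrable J μ := by
    rw [integrable_withDensity_iff_integrable_smul hw]
    have e : (fun x => w x • J x) = fun x => η x • J x := by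
      ext1 x
      rw [NNReal.smul_def, hwη]
    rw [e]
    exact hint
  have hJint : ∫ x, J x ∂μ = ∫ x, η x • J x := by
    rw [integral_withDensity_eq_integral_smul hw]
    congr 1
    ext1 x
    rw [NNReal.smul_def, hwη]
  have hmem : ∫ x, J x ∂μ ∈ closure s := by
    refine hsc.closure.integral_mem isClosed_closure ?_ hJi
    rw [ae_withDensity_iff (by fun_prop)]
    refine ae_of_all _ fun x hx => subset_closure (hJs x ?_)
    rw [← hwη]
    exact_mod_cast hx
  have hval : ∀ i z, (∫ x, η x • J x) i z = ∫ t, η t • iteratedFDeriv ℝ (i : ℕ) p (z - t) := by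
    intro i z
    have := (Yr_eval (r := r) i z).integral_comp_comm hint
    exact this.symm
  have hnorm : ‖∫ x, η x • J x‖ ≤ ∑ i, b i := by
    refine (pi_norm_le_iff_of_nonneg (Finset.sum_nonneg fun i _ => hb0 i)).2 fun i => ?_
    refine le_trans ?_ (Finset.single_le_sum (fun i _ => hb0 i) (Finset.mem_univ i))
    refine (BoundedContinuousFunction.norm_le (hb0 i)).2 fun z => ?_
    rw [hval, iter_conv_swap hη hpt]
    calc _ ≤ ∫ t, p t * b i := by
          refine norm_integral_le_of_norm_le ((test_integrable hpt).mul_const _)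
            (ae_of_all _ fun t => ?_)
          rw [norm_smul, Real.norm_of_nonneg (hp0 t)]
          exact mul_le_mul_of_nonneg_left (hb i _) (hp0 t)
      _ = b i := by rw [integral_mul_const, hp1, one_mul]
  rw [hJint] at hmem
  obtain ⟨y, ⟨φ, t1, t2, t3, t4⟩, hy⟩ := Metric.mem_closure_iff.1 hmem 1 one_pos
  have hyn : ‖y‖ ≤ ∑ i, b i + 1 := by
    rw [dist_eq_norm, norm_sub_rev] at hy
    have := norm_le_norm_add_norm_sub' y (∫ x, η x • J x)
    linarith
  have hCn : Cnorm r φ ≤ ‖y‖ := by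
    refine ciSup_le fun i => ciSup_le fun z => ?_
    rw [← t4]
    exact Yr_norm_apply_le y i z
  have hCn0 : 0 ≤ Cnorm r φ :=
    Real.iSup_nonneg fun i => Real.iSup_nonneg fun z => norm_nonneg _
  calc A ≤ f φ := t3
    _ ≤ |f φ| := le_abs_self _
    _ ≤ C * Cnorm r φ := hC φ t1 t2
    _ ≤ |C| * Cnorm r φ := mul_le_mul_of_nonneg_right (le_abs_self _) hCn0
    _ ≤ _ := mul_le_mul_of_nonneg_left (hCn.trans hyn) (abs_nonneg C)

/-- Optimality of the logarithmic rate for γ = 0, via the germ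
`F_x(y) = log(1 + 1/|y − x|)`. -/
theorem stmt10 {d : ℕ} (hd : 0 < d) (F : Ed d → ((Ed d → ℝ) →ₗ[ℝ] ℝ))
    (hF : ∀ (x : Ed d) (ψ : Ed d → ℝ), IsTestFunction ψ →
      F x ψ = ∫ y, Real.log (1 + ‖y - x‖⁻¹) * ψ y) :
    (∀ α : ℝ, α < 0 → ∀ φ : Ed d → ℝ, IsTestFunction φ →
      tsupport φ ⊆ closedBall (0 : Ed d) 1 → (∀ z, 0 ≤ φ z) → 0 < ∫ x, φ x →
      AlphaGammaCoherent α 0 F φ) ∧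
    (∀ ψ : Ed d → ℝ, IsTestFunction ψ → (∀ z, 0 ≤ ψ z) → 0 < ψ 0 → (∫ x, ψ x) = 1 →
      ¬ ∃ f : (Ed d → ℝ) →ₗ[ℝ] ℝ, IsDistribution f ∧
        ∀ δ : ℝ, 0 < δ → ∃ l₀ : ℝ, 0 < l₀ ∧
          ∀ l ∈ Set.Ioc (0:ℝ) l₀, ∀ x ∈ closedBall (0 : Ed d) 2,
            |f (scaled ψ x l) - F x (scaled ψ x l)| ≤ δ * Real.log (1 + 1 / l)) := by
  refine ⟨fun α hα φ hφ hs h0 _ => coherent hd F hF α hα φ hφ hs h0, ?_⟩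
  rintro ψ hψ h0 - hi ⟨f, hf, H⟩
  obtain ⟨B, hB⟩ := no_blowup hf hψ h0 hi
  obtain ⟨R, hR⟩ := hψ.2.isCompact.isBounded.subset_closedBall (0 : Ed d)
  have hR' : tsupport ψ ⊆ closedBall (0 : Ed d) (max 1 R) :=
    hR.trans (closedBall_subset_closedBall (le_max_right _ _))
  obtain ⟨l₀, hl₀, H⟩ := H (1 / 2) (by norm_num)
  have main : ∀ l : ℝ, 0 < l → l ≤ l₀ → l ≤ 1 →
      Real.log (1 + 1 / l) / 2 - Real.log (max 1 R) ≤ B := by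
    intro l h1 h2 h3
    refine hB l ⟨h1, h3⟩ _ fun x hx => ?_
    have k1 := (abs_le.1 (H l ⟨h1, h2⟩ x hx)).1
    rw [hF x _ (test_scaled hψ x h1)] at k1
    have k2 := F_lower hd hψ h0 hi (le_max_left 1 R) hR' x h1
    linarith
  set E := 2 * (B + Real.log (max 1 R)) + 1 with hE
  set l := min (min l₀ 1) (Real.exp (-E)) with hl
  have h1 : 0 < l := lt_min (lt_min hl₀ one_pos) (Real.exp_pos _)
  have h2 := main l h1 ((min_le_left _ _).trans (min_le_left _ _))
    ((min_le_left _ _).trans (min_le_right _ _))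
  have h3 : E ≤ Real.log (1 + 1 / l) := by
    rw [Real.le_log_iff_exp_le (by positivity)]
    have : l ≤ Real.exp (-E) := min_le_right _ _
    have := inv_anti₀ h1 this
    rw [Real.exp_neg, inv_inv] at this
    rw [one_div]
    linarith
  linarith
end
end

section
/- Let F be a γ-coherent germ with local homogeneity bounds (β_K), witnessed by a test function φ with ∫φ ≠ 0. Then homogeneity holds uniformly over all normalized test functions: for every compact K and every integer r > max{−α_{K̄_2}, −β_{K̄_2}}, one has |F_x(ψ_x^ε)| ≲ ε^{β'} with β' := β_{K̄_2}, uniformly for x ∈ K, ε ∈ (0,1], and ψ ∈ B_r. -/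
open MeasureTheory Metric Set Filter

noncomputable section

/-- γ-coherence of a germ with respect to a test function φ and a family of
exponents `αf K ≤ min{0,γ}` indexed by compact sets. -/
def GammaCoherentFam {d : ℕ} (γ : ℝ) (F : Ed d → ((Ed d → ℝ) →ₗ[ℝ] ℝ))
    (φ : Ed d → ℝ) (αf : Set (Ed d) → ℝ) : Prop :=
  ∀ K : Set (Ed d), IsCompact K → αf K ≤ min 0 γ ∧ ∃ C : ℝ,
    ∀ y ∈ K, ∀ z ∈ K, ∀ ε ∈ Set.Ioc (0:ℝ) 1,
      |F z (scaled φ y ε) - F y (scaled φ y ε)| ≤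
        C * ε ^ (αf K) * (‖z - y‖ + ε) ^ (γ - αf K)


open scoped Convolution Pointwise

/-! ### Convolution, jets and distributions -/

/-- Convolution with a scalar kernel. -/
def cv {d : ℕ} {E : Type*} [NormedAddCommGroup E] [NormedSpace ℝ E]
    (h : Ed d → ℝ) (f : Ed d → E) : Ed d → E :=
  h ⋆[ContinuousLinearMap.lsmul ℝ ℝ, volume] f

lemma cv_apply {d : ℕ} {E : Type*} [NormedAddCommGroup E] [NormedSpace ℝ E]
    (h : Ed d → ℝ) (f : Ed d → E) (x : Ed d) : cv h f x = ∫ t, h t • f (x - t) := rfl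

lemma cv_fderiv {d : ℕ} {E : Type*} [NormedAddCommGroup E] [NormedSpace ℝ E]
    (h : Ed d → ℝ) (hh : Continuous h) (f : Ed d → E) (hf : ContDiff ℝ 1 f)
    (hfc : HasCompactSupport f) (x : Ed d) :
    fderiv ℝ (cv h f) x = cv h (fderiv ℝ f) x := by
  have := hfc.hasFDerivAt_convolution_right (μ := volume) (ContinuousLinearMap.lsmul ℝ ℝ)
    hh.locallyIntegrable hf x
  unfold cv
  rw [this.fderiv]
  rfl

lemma cv_equiv {d : ℕ} {E F : Type*} [NormedAddCommGroup E] [NormedSpace ℝ E]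
    [NormedAddCommGroup F] [NormedSpace ℝ F] (e : E ≃ₗᵢ[ℝ] F)
    (h : Ed d → ℝ) (f : Ed d → E) (x : Ed d) : e (cv h f x) = cv h (fun y => e (f y)) x := by
  rw [cv_apply, cv_apply]
  refine (e.toContinuousLinearEquiv.integral_comp_comm (fun t => h t • f (x - t))).symm.trans ?_
  refine integral_congr_ae (Eventually.of_forall fun y => ?_)
  simp

lemma cv_iteratedFDeriv {d : ℕ} (h : Ed d → ℝ) (hh : Continuous h) (f : Ed d → ℝ)
    (hf : ContDiff ℝ (⊤ : ℕ∞) f) (hfc : HasCompactSupport f) (n : ℕ) (x : Ed d) :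
    iteratedFDeriv ℝ n (cv h f) x = cv h (iteratedFDeriv ℝ n f) x := by
  induction n generalizing x with
  | zero =>
    rw [iteratedFDeriv_zero_eq_comp, iteratedFDeriv_zero_eq_comp]
    exact cv_equiv (continuousMultilinearCurryFin0 ℝ (Ed d) ℝ).symm h f x
  | succ n ih =>
    have e : iteratedFDeriv ℝ n (cv h f) = cv h (iteratedFDeriv ℝ n f) := funext ih
    rw [iteratedFDeriv_succ_eq_comp_left, iteratedFDeriv_succ_eq_comp_left]
    simp only [Function.comp]
    rw [e, cv_fderiv h hh _ _ (hfc.iteratedFDeriv n)]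
    · exact cv_equiv (E := Ed d →L[ℝ] (ContinuousMultilinearMap ℝ (fun _ : Fin n => Ed d) ℝ))
        (F := ContinuousMultilinearMap ℝ (fun _ : Fin (n + 1) => Ed d) ℝ)
        (continuousMultilinearCurryLeftEquiv ℝ (fun _ : Fin (n + 1) => Ed d)
        ℝ).symm h _ x
    · exact hf.iteratedFDeriv_right (m := 1) (by exact_mod_cast le_top)

/-- The space of test functions. -/
def TF (d : ℕ) : Submodule ℝ (Ed d → ℝ) where
  carrier := {f | IsTestFunction f}
  add_mem' := fun hf hg => ⟨hf.1.add hg.1, hf.2.add hg.2⟩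
  zero_mem' := ⟨contDiff_const, HasCompactSupport.zero⟩
  smul_mem' := fun _ _ hf => ⟨contDiff_const.smul hf.1, hf.2.smul_left⟩

lemma IsTestFunction.cont_iter {d : ℕ} {f : Ed d → ℝ} (hf : IsTestFunction f) (n : ℕ) :
    Continuous (iteratedFDeriv ℝ n f) :=
  hf.1.continuous_iteratedFDeriv (by exact_mod_cast le_top)

lemma IsTestFunction.bdd_iter {d : ℕ} {f : Ed d → ℝ} (hf : IsTestFunction f) (n : ℕ) :
    ∃ C, ∀ x, ‖iteratedFDeriv ℝ n f x‖ ≤ C :=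
  (hf.2.iteratedFDeriv n).exists_bound_of_continuous (hf.cont_iter n)

/-- The space of jets. -/
abbrev JX (d m : ℕ) := (i : Fin (m + 1)) →
  BoundedContinuousFunction (Ed d) (ContinuousMultilinearMap ℝ (fun _ : Fin (i : ℕ) => Ed d) ℝ)

instance instJXnormed (d m : ℕ) : NormedAddCommGroup (JX d m) := Pi.normedAddCommGroup

instance instJXspace (d m : ℕ) : NormedSpace ℝ (JX d m) := Pi.normedSpace

/-- The jet map. -/
def jet (d m : ℕ) : TF d →ₗ[ℝ] JX d m where
  toFun f i := BoundedContinuousFunction.ofNormedAddCommGroup (iteratedFDeriv ℝ (i : ℕ) f.1)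
    (IsTestFunction.cont_iter f.2 i) (IsTestFunction.bdd_iter f.2 i).choose
    (IsTestFunction.bdd_iter f.2 i).choose_spec
  map_add' f g := by
    ext i x : 2
    have hf : IsTestFunction f.1 := f.2
    have hg : IsTestFunction g.1 := g.2
    exact iteratedFDeriv_add_apply (hf.1.of_le (by exact_mod_cast le_top)).contDiffAt
      (hg.1.of_le (by exact_mod_cast le_top)).contDiffAt
  map_smul' c f := by
    ext i x : 2
    have hf : IsTestFunction f.1 := f.2
    exact iteratedFDeriv_const_smul_apply (hf.1.of_le (by exact_mod_cast le_top)).contDiffAt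

lemma jet_apply {d m : ℕ} (f : TF d) (i : Fin (m + 1)) (x : Ed d) :
    jet d m f i x = iteratedFDeriv ℝ (i : ℕ) f.1 x := rfl

lemma Cnorm_le_jet {d m : ℕ} (f : TF d) : Cnorm m f.1 ≤ ‖jet d m f‖ := by
  unfold Cnorm
  refine ciSup_le fun i => ciSup_le fun x => ?_
  rw [← jet_apply]
  exact ((jet d m f i).norm_coe_le_norm x).trans (norm_le_pi_norm (jet d m f) i)

lemma jet_injective {d m : ℕ} : Function.Injective (jet d m) := by
  intro f g h
  ext x
  have := congrArg (fun J : JX d m => (J 0 x) (fun _ => 0)) h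
  simp only [jet_apply] at this
  exact this

lemma exists_jet_functional {d : ℕ} (T : (Ed d → ℝ) →ₗ[ℝ] ℝ) (hT : IsDistribution T)
    (K : Set (Ed d)) (hK : IsCompact K) :
    ∃ m : ℕ, ∃ L : JX d m →L[ℝ] ℝ, ∀ f : TF d, tsupport f.1 ⊆ K → T f.1 = L (jet d m f) := by
  obtain ⟨m, C, hC⟩ := hT K hK
  refine ⟨m, ?_⟩
  let S : Submodule ℝ (TF d) :=
    { carrier := {f | tsupport f.1 ⊆ K}
      add_mem' := fun {f g} hf hg => by
        refine closure_minimal ?_ hK.isClosed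
        refine (Function.support_add f.1 g.1).trans (union_subset ?_ ?_)
        · exact (subset_tsupport _).trans hf
        · exact (subset_tsupport _).trans hg
      zero_mem' := by simp [tsupport]
      smul_mem' := fun c f hf => (tsupport_smul_subset_right (fun _ => c) f.1).trans hf }
  let J : S →ₗ[ℝ] JX d m := (jet d m).comp S.subtype
  have hJ : Function.Injective J := jet_injective.comp S.injective_subtype
  let e := LinearEquiv.ofInjective J hJ
  let T' : LinearMap.range J →ₗ[ℝ] ℝ :=
    (T.comp ((TF d).subtype.comp S.subtype)).comp e.symm.toLinearMap
  have hT' : ∀ f : S, T' (e f) = T f.1.1 := by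
    intro f
    simp [T']
  let T'' : LinearMap.range J →L[ℝ] ℝ := T'.mkContinuous |C| (by
    intro u
    obtain ⟨f, rfl⟩ := e.surjective u
    rw [hT']
    have h1 := hC f.1.1 f.1.2 f.2
    have h2 : Cnorm m f.1.1 ≤ ‖e f‖ := Cnorm_le_jet f.1
    have h0 : 0 ≤ Cnorm m f.1.1 :=
      Real.iSup_nonneg fun i => Real.iSup_nonneg fun x => norm_nonneg _
    calc ‖T f.1.1‖ ≤ C * Cnorm m f.1.1 := h1
      _ ≤ |C| * Cnorm m f.1.1 := by gcongr; exact le_abs_self C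
      _ ≤ |C| * ‖e f‖ := by gcongr)
  obtain ⟨L, hL, -⟩ := exists_extension_norm_eq (LinearMap.range J) T''
  refine ⟨L, fun f hf => ?_⟩
  have := hL (e ⟨f, hf⟩)
  have h3 : T'' (e ⟨f, hf⟩) = T f.1 := hT' ⟨f, hf⟩
  rw [h3] at this
  rw [← this]
  rfl

lemma IsTestFunction.translate {d : ℕ} {f : Ed d → ℝ} (hf : IsTestFunction f) (y : Ed d) :
    IsTestFunction (fun z => f (z - y)) :=
  ⟨hf.1.comp (contDiff_id.sub contDiff_const), hf.2.comp_homeomorph (Homeomorph.subRight y)⟩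

lemma tsupport_translate {d : ℕ} (f : Ed d → ℝ) (y : Ed d) {R : ℝ} (hy : ‖y‖ ≤ R)
    (hf : HasCompactSupport f) :
    tsupport (fun z => f (z - y)) ⊆ tsupport f + closedBall (0 : Ed d) R := by
  refine closure_minimal ?_ (hf.isCompact.add (isCompact_closedBall _ _)).isClosed
  intro z hz
  refine ⟨z - y, subset_tsupport _ hz, y, by simpa using hy, by simp⟩

lemma continuous_jet_translate {d m : ℕ} (f : Ed d → ℝ) (hf : IsTestFunction f) :
    Continuous (fun y => jet d m ⟨fun z => f (z - y), hf.translate y⟩) := by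
  refine continuous_pi fun i => ?_
  have huc : UniformContinuous (iteratedFDeriv ℝ (i : ℕ) f) :=
    (hf.2.iteratedFDeriv i).uniformContinuous_of_continuous (hf.cont_iter i)
  rw [Metric.continuous_iff]
  intro y ε hε
  obtain ⟨δ, hδ, H⟩ := Metric.uniformContinuous_iff.1 huc (ε / 2) (by positivity)
  refine ⟨δ, hδ, fun y' hy' => ?_⟩
  refine lt_of_le_of_lt ((BoundedContinuousFunction.dist_le (by positivity)).2 fun z => ?_)
    (half_lt_self hε)
  rw [jet_apply, jet_apply]
  simp only [iteratedFDeriv_comp_sub]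
  refine (H ?_).le
  simpa only [dist_sub_left] using hy'

lemma IsTestFunction.cv {d : ℕ} {h f : Ed d → ℝ} (hh : Continuous h) (hhc : HasCompactSupport h)
    (hf : IsTestFunction f) : IsTestFunction (cv h f) :=
  ⟨hf.2.contDiff_convolution_right _ hh.locallyIntegrable hf.1, hhc.convolution _ hf.2⟩

lemma continuous_T_translate {d : ℕ} (T : (Ed d → ℝ) →ₗ[ℝ] ℝ) (hT : IsDistribution T)
    (f : Ed d → ℝ) (hf : IsTestFunction f) : Continuous (fun y => T (fun z => f (z - y))) := by
  rw [continuous_iff_continuousAt]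
  intro y
  obtain ⟨m, L, hL⟩ := exists_jet_functional T hT (tsupport f + closedBall (0 : Ed d) (‖y‖ + 1))
    (hf.2.isCompact.add (isCompact_closedBall _ _))
  have hc : Continuous (fun y => L (jet d m ⟨fun z => f (z - y), hf.translate y⟩)) :=
    L.continuous.comp (continuous_jet_translate f hf)
  refine hc.continuousAt.congr ?_
  have : ∀ᶠ y' in nhds y, ‖y'‖ < ‖y‖ + 1 :=
    continuous_norm.continuousAt.eventually (gt_mem_nhds (by simp))
  filter_upwards [this] with y' hy'
  exact (hL ⟨fun z => f (z - y'), hf.translate y'⟩ (tsupport_translate f y' hy'.le hf.2)).symm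

lemma tsupport_cv {d : ℕ} {h f : Ed d → ℝ} (hhc : HasCompactSupport h) (hfc : HasCompactSupport f) :
    tsupport (cv h f) ⊆ tsupport f + tsupport h := by
  refine closure_minimal ?_ (hfc.isCompact.add hhc.isCompact).isClosed
  refine (support_convolution_subset_swap _).trans ?_
  exact add_subset_add (subset_tsupport _) (subset_tsupport _)

lemma T_cv {d : ℕ} (T : (Ed d → ℝ) →ₗ[ℝ] ℝ) (hT : IsDistribution T)
    (f : Ed d → ℝ) (hf : IsTestFunction f) (h : Ed d → ℝ) (hh : Continuous h)
    (hhc : HasCompactSupport h) :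
    T (cv h f) = ∫ y, h y * T (fun z => f (z - y)) := by
  obtain ⟨R, hR⟩ := hhc.isCompact.isBounded.subset_closedBall (0 : Ed d)
  obtain ⟨m, L, hL⟩ := exists_jet_functional T hT (tsupport f + closedBall (0 : Ed d) R)
    (hf.2.isCompact.add (isCompact_closedBall _ _))
  have hcont := continuous_jet_translate (m := m) f hf
  have hint : Integrable (fun y => h y • jet d m ⟨fun z => f (z - y), hf.translate y⟩) :=
    (hh.smul hcont).integrable_of_hasCompactSupport hhc.smul_right
  have hjet : jet d m ⟨cv h f, IsTestFunction.cv hh hhc hf⟩ =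
      ∫ y, h y • jet d m ⟨fun z => f (z - y), hf.translate y⟩ := by
    ext i x : 2
    let E : JX d m →L[ℝ] _ := (BoundedContinuousFunction.evalCLM ℝ x).comp
      (ContinuousLinearMap.proj (R := ℝ) (φ := fun i : Fin (m + 1) =>
        BoundedContinuousFunction (Ed d)
          (ContinuousMultilinearMap ℝ (fun _ : Fin (i : ℕ) => Ed d) ℝ)) i)
    have := E.integral_comp_comm hint
    refine Eq.trans ?_ this
    rw [jet_apply, cv_iteratedFDeriv h hh f hf.1 hf.2, cv_apply]
    refine integral_congr_ae (Eventually.of_forall fun y => ?_)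
    simp only [map_smul]
    congr 1
    change _ = iteratedFDeriv ℝ (i : ℕ) (fun z => f (z - y)) x
    rw [iteratedFDeriv_comp_sub]
  have h1 := hL ⟨cv h f, IsTestFunction.cv hh hhc hf⟩
    ((tsupport_cv hhc hf.2).trans (add_subset_add_left hR))
  change T (cv h f) = _ at h1
  rw [h1, hjet, ← L.integral_comp_comm hint]
  refine integral_congr_ae (Eventually.of_forall fun y => ?_)
  simp only [map_smul, smul_eq_mul]
  by_cases hy : h y = 0
  · simp [hy]
  · congr 1
    have : y ∈ closedBall (0 : Ed d) R := hR (subset_tsupport _ hy)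
    exact (hL ⟨fun z => f (z - y), hf.translate y⟩
      (tsupport_translate f y (by simpa using this) hf.2)).symm


/-! ### Scaling -/

lemma scaled_zero_apply {d : ℕ} (f : Ed d → ℝ) (l : ℝ) (z : Ed d) :
    scaled f 0 l z = (l ^ d)⁻¹ * f (l⁻¹ • z) := by simp [scaled]

lemma scaled_eq_translate {d : ℕ} (f : Ed d → ℝ) (y : Ed d) (l : ℝ) :
    scaled f y l = fun z => scaled f 0 l (z - y) := by
  ext z; simp [scaled]

lemma scaled_zero_scaled {d : ℕ} (f : Ed d → ℝ) (y : Ed d) (a b : ℝ) :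
    scaled (scaled f 0 a) y b = scaled f y (a * b) := by
  ext z
  simp only [scaled, sub_zero, smul_smul, mul_inv, mul_pow]
  ring

lemma scaled_scaled {d : ℕ} (f : Ed d → ℝ) (x y : Ed d) (a b : ℝ) (hb : b ≠ 0) :
    scaled (scaled f y a) x b = scaled f (x + b • y) (a * b) := by
  ext z
  have : a⁻¹ • (b⁻¹ • (z - x) - y) = (a * b)⁻¹ • (z - (x + b • y)) := by
    rw [mul_inv, mul_smul]
    congr 1
    rw [← sub_sub, smul_sub b⁻¹ (z - x), smul_smul, inv_mul_cancel₀ hb, one_smul]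
  simp only [scaled, this, mul_inv, mul_pow]
  ring

lemma IsTestFunction.scaled {d : ℕ} {f : Ed d → ℝ} (hf : IsTestFunction f) (y : Ed d) {l : ℝ}
    (hl : l ≠ 0) : IsTestFunction (scaled f y l) := by
  constructor
  · unfold _root_.scaled
    exact contDiff_const.mul (hf.1.comp ((contDiff_id.sub contDiff_const).const_smul _))
  · have h1 : HasCompactSupport (fun z => f (l⁻¹ • z)) := hf.2.comp_smul (inv_ne_zero hl)
    have h2 : HasCompactSupport (fun z => f (l⁻¹ • (z - y))) :=
      h1.comp_homeomorph (Homeomorph.subRight y)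
    exact h2.mul_left

lemma scaled_vanish {d : ℕ} {f : Ed d → ℝ} {R : ℝ} (hf : ∀ u, R < ‖u‖ → f u = 0) {l : ℝ}
    (hl : 0 < l) : ∀ u, l * R < ‖u‖ → scaled f 0 l u = 0 := by
  intro u hu
  rw [scaled_zero_apply, hf, mul_zero]
  rw [norm_smul, norm_inv, Real.norm_eq_abs, abs_of_pos hl, lt_inv_mul_iff₀ hl]
  exact hu

lemma integral_scaled_s15 {d : ℕ} (f g : Ed d → ℝ) {l : ℝ} (hl : 0 < l) :
    ∫ t, scaled f 0 l t * g t = ∫ u, f u * g (l • u) := by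
  have h := Measure.integral_comp_smul (volume : Measure (Ed d)) (fun t => scaled f 0 l t * g t) l
  have hp : 0 < l ^ d := pow_pos hl d
  simp only [finrank_euclideanSpace_fin, smul_eq_mul, abs_of_pos (inv_pos.2 hp)] at h
  have h2 : ∀ u, scaled f 0 l (l • u) * g (l • u) = (l ^ d)⁻¹ * (f u * g (l • u)) := by
    intro u
    rw [scaled_zero_apply, smul_smul, inv_mul_cancel₀ hl.ne', one_smul]
    ring
  simp only [h2, integral_const_mul] at h
  exact (mul_left_cancel₀ (inv_ne_zero hp.ne') h).symm

/-! ### Algebra of convolutions of test functions -/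

lemma IsTestFunction.cont {d : ℕ} {f : Ed d → ℝ} (hf : IsTestFunction f) : Continuous f :=
  hf.1.continuous

lemma IsTestFunction.cv' {d : ℕ} {f g : Ed d → ℝ} (hf : IsTestFunction f)
    (hg : IsTestFunction g) : IsTestFunction (_root_.cv f g) :=
  IsTestFunction.cv hf.cont hf.2 hg

lemma IsTestFunction.integrable {d : ℕ} {f : Ed d → ℝ} (hf : IsTestFunction f) : Integrable f :=
  hf.cont.integrable_of_hasCompactSupport hf.2

lemma IsTestFunction.integrable_mul {d : ℕ} {f g : Ed d → ℝ} (hf : IsTestFunction f)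
    (hg : Continuous g) : Integrable (fun u => f u * g u) :=
  (hf.cont.mul hg).integrable_of_hasCompactSupport hf.2.mul_right

lemma cv_comm {d : ℕ} (f g : Ed d → ℝ) : cv f g = cv g f := by
  ext x
  rw [cv_apply, cv_apply]
  rw [← integral_sub_left_eq_self _ volume x]
  simp only [sub_sub_cancel, smul_eq_mul, mul_comm]

lemma cv_assoc {d : ℕ} {f g k : Ed d → ℝ} (hf : IsTestFunction f) (hg : IsTestFunction g)
    (hk : IsTestFunction k) : cv (cv f g) k = cv f (cv g k) := by
  ext x
  unfold cv
  refine convolution_assoc _ _ _ _ (fun a b c => ?_) hf.cont.aestronglyMeasurable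
    hg.cont.aestronglyMeasurable hk.cont.aestronglyMeasurable ?_ ?_ ?_
  · simp [mul_assoc]
  · exact Eventually.of_forall fun y =>
      hg.2.convolutionExists_right _ hf.cont.locallyIntegrable hg.cont y
  · exact Eventually.of_forall fun y =>
      hk.2.norm.convolutionExists_right _ hg.cont.norm.locallyIntegrable hk.cont.norm y
  · refine HasCompactSupport.convolutionExists_right _ (hg.2.norm.convolution _ hk.2.norm)
      hf.cont.norm.locallyIntegrable ?_ x
    exact hk.2.norm.continuous_convolution_right _ hg.cont.norm.locallyIntegrable hk.cont.norm

lemma cv_sub_left {d : ℕ} {f g k : Ed d → ℝ} (hf : IsTestFunction f) (hg : IsTestFunction g)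
    (hk : IsTestFunction k) : cv (f - g) k = cv f k - cv g k := by
  ext x
  rw [Pi.sub_apply, cv_apply, cv_apply, cv_apply, ← integral_sub]
  · simp only [Pi.sub_apply, sub_smul]
  · exact hf.integrable_mul (hk.cont.comp (by fun_prop))
  · exact hg.integrable_mul (hk.cont.comp (by fun_prop))

lemma scaled_cv {d : ℕ} (f g : Ed d → ℝ) {l : ℝ} (hl : 0 < l) :
    scaled (cv f g) 0 l = cv (scaled f 0 l) (scaled g 0 l) := by
  ext x
  rw [cv_apply, scaled_zero_apply, cv_apply]
  simp only [smul_eq_mul]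
  rw [integral_scaled_s15 f (fun t => scaled g 0 l (x - t)) hl, ← integral_const_mul]
  congr 1
  ext u
  rw [scaled_zero_apply, smul_sub, smul_smul, inv_mul_cancel₀ hl.ne', one_smul]
  ring

lemma cv_vanish {d : ℕ} {f g : Ed d → ℝ} {a b c : ℝ} (hf : ∀ u, a < ‖u‖ → f u = 0)
    (hg : ∀ u, b < ‖u‖ → g u = 0) (hc : a + b ≤ c) : ∀ u, c < ‖u‖ → cv f g u = 0 := by
  intro u hu
  rw [cv_apply]
  refine integral_eq_zero_of_ae (Eventually.of_forall fun t => ?_)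
  by_cases h : a < ‖t‖
  · simp [hf t h]
  · have : b < ‖u - t‖ := by
      have := norm_sub_norm_le u t
      push Not at h
      linarith
    simp [hg _ this]

lemma cv_bound {d : ℕ} {f g : Ed d → ℝ} (hf : IsTestFunction f) {B : ℝ}
    (hg : ∀ u, |g u| ≤ B) (x : Ed d) : |cv f g x| ≤ (∫ u, |f u|) * B := by
  rw [cv_apply, ← integral_mul_const]
  rw [← Real.norm_eq_abs]
  refine norm_integral_le_of_norm_le (hf.integrable.abs.mul_const _)
    (Eventually.of_forall fun t => ?_)
  rw [smul_eq_mul, norm_mul]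
  exact mul_le_mul_of_nonneg_left (hg _) (norm_nonneg _)

/-! ### Facts on `B_r` -/

lemma Br.bound {d r : ℕ} {ψ : Ed d → ℝ} (hψ : Br r ψ) (i : ℕ) (hi : i ≤ r) (x : Ed d) :
    ‖iteratedFDeriv ℝ i ψ x‖ ≤ 1 := by
  refine le_trans ?_ hψ.2.2
  unfold Cnorm
  have h1 : BddAbove (range fun x => ‖iteratedFDeriv ℝ i ψ x‖) := by
    obtain ⟨C, hC⟩ := hψ.1.bdd_iter i
    exact ⟨C, by rintro _ ⟨x, rfl⟩; exact hC x⟩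
  refine (le_ciSup h1 x).trans ?_
  exact le_ciSup (f := fun i : Fin (r + 1) => ⨆ x : Ed d, ‖iteratedFDeriv ℝ (i : ℕ) ψ x‖)
    (Set.finite_range _).bddAbove (⟨i, by omega⟩ : Fin (r + 1))

lemma Br.abs_le {d r : ℕ} {ψ : Ed d → ℝ} (hψ : Br r ψ) (x : Ed d) : |ψ x| ≤ 1 := by
  have := hψ.bound 0 (Nat.zero_le _) x
  rwa [norm_iteratedFDeriv_zero] at this

lemma Br.vanish {d r : ℕ} {ψ : Ed d → ℝ} (hψ : Br r ψ) : ∀ u, 1 < ‖u‖ → ψ u = 0 := by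
  intro u hu
  by_contra h
  have := hψ.2.1 (subset_tsupport _ h)
  simp at this
  linarith

/-! ### The key cancellation estimate -/

lemma taylor_cancel {d r : ℕ} (hr : 1 ≤ r) {k : Ed d → ℝ} (hk : IsTestFunction k)
    (hkv : ∀ u, 1 < ‖u‖ → k u = 0)
    (hkm : ∀ n < r, ∀ A : ContinuousMultilinearMap ℝ (fun _ : Fin n => Ed d) ℝ,
      ∫ u, k u * A (fun _ => u) = 0)
    {ψ : Ed d → ℝ} (hψ : Br r ψ) {δ : ℝ} (hδ : 0 < δ) (y : Ed d) :
    |cv (scaled k 0 δ) ψ y| ≤ (∫ u, |k u|) * δ ^ r := by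
  obtain ⟨n, rfl⟩ : ∃ n, r = n + 1 := ⟨r - 1, by omega⟩
  have hc : ∀ j, Continuous fun u : Ed d => iteratedFDeriv ℝ j ψ y (fun _ => u) := fun j =>
    (iteratedFDeriv ℝ j ψ y).cont.comp (continuous_pi fun _ => continuous_id)
  let P : Ed d → ℝ := fun u => ∑ j ∈ Finset.range (n + 1),
    (j.factorial : ℝ)⁻¹ * ((-δ) ^ j * iteratedFDeriv ℝ j ψ y (fun _ => u))
  have hP : ∫ u, k u * P u = 0 := by
    simp only [P, Finset.mul_sum]
    rw [integral_finsetSum]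
    · refine Finset.sum_eq_zero fun j hj => ?_
      have := hkm j (Finset.mem_range.1 hj) (iteratedFDeriv ℝ j ψ y)
      have e : ∀ u : Ed d, k u * ((j.factorial : ℝ)⁻¹ * ((-δ) ^ j *
          iteratedFDeriv ℝ j ψ y (fun _ => u))) =
          ((j.factorial : ℝ)⁻¹ * (-δ) ^ j) * (k u * iteratedFDeriv ℝ j ψ y (fun _ => u)) := by
        intro u; ring
      simp only [e, integral_const_mul, this, mul_zero]
    · intro j hj
      exact hk.integrable_mul (continuous_const.mul (continuous_const.mul (hc j)))
  have hPc : Continuous P :=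
    continuous_finsetSum _ fun j _ => continuous_const.mul (continuous_const.mul (hc j))
  have h1 : cv (scaled k 0 δ) ψ y = ∫ u, k u * (ψ (y - δ • u) - P u) := by
    rw [cv_apply]
    simp only [smul_eq_mul, mul_sub]
    rw [integral_scaled_s15 k (fun t => ψ (y - t)) hδ, integral_sub, hP, sub_zero]
    · exact hk.integrable_mul (hψ.1.cont.comp (by fun_prop))
    · exact hk.integrable_mul hPc
  rw [h1, ← integral_mul_const]
  rw [← Real.norm_eq_abs]
  refine norm_integral_le_of_norm_le (hk.integrable.abs.mul_const _)
    (Eventually.of_forall fun u => ?_)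
  rw [norm_mul, Real.norm_eq_abs, Real.norm_eq_abs]
  by_cases hu : 1 < ‖u‖
  · simp [hkv u hu]
  push Not at hu
  refine mul_le_mul_of_nonneg_left ?_ (abs_nonneg _)
  have ht := map_add_eq_sum_add_integral_iteratedFDeriv (n := n) (f := ψ) (x := y)
    (y := (-δ) • u) (fun t _ => (hψ.1.1.of_le (by exact_mod_cast le_top)).contDiffAt)
  have e1 : y + (-δ) • u = y - δ • u := by rw [neg_smul, sub_eq_add_neg]
  have e2 : ∑ j ∈ Finset.range (n + 1), (j.factorial : ℝ)⁻¹ •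
      (iteratedFDeriv ℝ j ψ y (fun _ => (-δ) • u)) = P u := by
    refine Finset.sum_congr rfl fun j _ => ?_
    rw [ContinuousMultilinearMap.map_smul_univ]
    simp
  rw [e1, e2] at ht
  rw [ht, add_sub_cancel_left, smul_eq_mul, abs_mul]
  have h3 : |((n.factorial : ℝ))⁻¹| ≤ 1 := by
    rw [abs_of_nonneg (by positivity)]
    exact inv_le_one_of_one_le₀ (by exact_mod_cast Nat.factorial_pos n)
  have h4 : ‖∫ t in (0:ℝ)..1, (1 - t) ^ n •
      iteratedFDeriv ℝ (n + 1) ψ (y + t • (-δ) • u) (fun _ => (-δ) • u)‖ ≤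
      δ ^ (n + 1) * |1 - 0| := by
    refine intervalIntegral.norm_integral_le_of_norm_le_const fun t ht => ?_
    rw [uIoc_of_le zero_le_one] at ht
    rw [norm_smul]
    have h5 : ‖(1 - t) ^ n‖ ≤ 1 := by
      rw [norm_pow, Real.norm_eq_abs]
      exact pow_le_one₀ (abs_nonneg _) (abs_le.2 ⟨by linarith [ht.2], by linarith [ht.1]⟩)
    have h6 : ‖iteratedFDeriv ℝ (n + 1) ψ (y + t • (-δ) • u) (fun _ => (-δ) • u)‖ ≤
        δ ^ (n + 1) := by
      refine (ContinuousMultilinearMap.le_opNorm _ _).trans ?_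
      have h7 := hψ.bound (n + 1) le_rfl (y + t • (-δ) • u)
      have h8 : ‖(-δ) • u‖ ≤ δ := by
        rw [norm_smul, norm_neg, Real.norm_eq_abs, abs_of_pos hδ]
        exact mul_le_of_le_one_right hδ.le hu
      rw [Finset.prod_const, Finset.card_univ, Fintype.card_fin]
      calc _ ≤ 1 * δ ^ (n + 1) := by gcongr
        _ = _ := one_mul _
    calc _ ≤ 1 * δ ^ (n + 1) := by gcongr
        _ = _ := one_mul _
  simp only [sub_zero, abs_one, mul_one] at h4
  calc _ ≤ 1 * δ ^ (n + 1) := by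
        gcongr
        exact h4
    _ = _ := one_mul _

lemma T_cv_bound {d : ℕ} (T : (Ed d → ℝ) →ₗ[ℝ] ℝ) (hT : IsDistribution T)
    {k : Ed d → ℝ} (hk : IsTestFunction k) {δ : ℝ} (hδ : 0 < δ) {M B : ℝ} (hB : 0 ≤ B)
    (hM : ∀ y : Ed d, ‖y‖ ≤ 2 → |T (scaled k y δ)| ≤ M)
    {h : Ed d → ℝ} (hh : IsTestFunction h) (hhv : ∀ u, 2 < ‖u‖ → h u = 0)
    (hhB : ∀ u, |h u| ≤ B) :
    |T (cv h (scaled k 0 δ))| ≤ B * M * volume.real (closedBall (0 : Ed d) 2) := by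
  rw [T_cv T hT _ (hk.scaled 0 hδ.ne') h hh.cont hh.2]
  have e : ∫ y, h y * T (fun z => scaled k 0 δ (z - y)) =
      ∫ y in closedBall (0 : Ed d) 2, h y * T (fun z => scaled k 0 δ (z - y)) := by
    refine (setIntegral_eq_integral_of_forall_compl_eq_zero fun y hy => ?_).symm
    rw [hhv y (by simpa using hy), zero_mul]
  rw [e]
  rw [← Real.norm_eq_abs]
  refine norm_setIntegral_le_of_norm_le_const measure_closedBall_lt_top fun y hy => ?_
  rw [← scaled_eq_translate, norm_mul]
  exact mul_le_mul (hhB y) (hM y (by simpa using hy)) (abs_nonneg _) hB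

/-- Reproducing kernels: the approximations converge. -/
lemma T_approx {d : ℕ} (T : (Ed d → ℝ) →ₗ[ℝ] ℝ) (hT : IsDistribution T)
    {ρ : Ed d → ℝ} (hρ : IsTestFunction ρ) (hρi : ∫ u, ρ u = 1)
    {ψ : Ed d → ℝ} (hψ : IsTestFunction ψ) :
    Tendsto (fun n : ℕ => T (cv (scaled ρ 0 ((1 / 2 : ℝ) ^ n)) ψ)) atTop (nhds (T ψ)) := by
  let G : Ed d → ℝ := fun y => T (fun z => ψ (z - y))
  have hG : Continuous G := continuous_T_translate T hT ψ hψ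
  have h1 : ∀ n : ℕ, T (cv (scaled ρ 0 ((1 / 2 : ℝ) ^ n)) ψ) =
      ∫ u in tsupport ρ, ρ u * G (((1 / 2 : ℝ) ^ n) • u) := by
    intro n
    have hp : (0 : ℝ) < (1 / 2) ^ n := by positivity
    have hs := hρ.scaled 0 hp.ne'
    rw [T_cv T hT ψ hψ _ hs.cont hs.2, integral_scaled_s15 ρ G hp]
    refine (setIntegral_eq_integral_of_forall_compl_eq_zero fun y hy => ?_).symm
    rw [image_eq_zero_of_notMem_tsupport hy, zero_mul]
  simp only [h1]
  have hc : Continuous (fun l : ℝ => ∫ u in tsupport ρ, ρ u * G (l • u)) := by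
    refine continuous_parametric_integral_of_continuous ?_ hρ.2.isCompact
    have := hρ.cont
    simp only [Function.uncurry_def]
    fun_prop
  have h2 : ∫ u in tsupport ρ, ρ u * G ((0:ℝ) • u) = T ψ := by
    simp only [zero_smul, G, sub_zero]
    rw [integral_mul_const]
    rw [setIntegral_eq_integral_of_forall_compl_eq_zero, hρi, one_mul]
    intro y hy
    exact image_eq_zero_of_notMem_tsupport hy
  rw [← h2]
  exact (hc.tendsto 0).comp (tendsto_pow_atTop_nhds_zero_of_lt_one (by norm_num) (by norm_num))

/-- The abstract estimate. -/
lemma key_estimate {d r : ℕ} (hr : 1 ≤ r) {s : ℝ} (hs : s < r) {k : Ed d → ℝ}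
    (hk : IsTestFunction k) (hkv : ∀ u, 1 / 2 < ‖u‖ → k u = 0) (hki : ∫ u, k u = 1)
    (hkm : ∀ n, 1 ≤ n → n < r → ∀ A : ContinuousMultilinearMap ℝ (fun _ : Fin n => Ed d) ℝ,
      ∫ u, k u * A (fun _ => u) = 0) :
    ∃ C : ℝ, ∀ (T : (Ed d → ℝ) →ₗ[ℝ] ℝ), IsDistribution T → ∀ M : ℝ, 
      (∀ δ ∈ Set.Ioc (0:ℝ) 1, ∀ y : Ed d, ‖y‖ ≤ 2 → |T (scaled k y δ)| ≤ M * δ ^ (-s)) →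
      ∀ ψ : Ed d → ℝ, Br r ψ → |T ψ| ≤ C * M := by
  let S : ℝ → Ed d → ℝ := fun l => scaled k 0 l
  have hS : ∀ l, 0 < l → IsTestFunction (S l) := fun l hl => hk.scaled 0 hl.ne'
  have hSv : ∀ l, 0 < l → ∀ u, l * (1 / 2) < ‖u‖ → S l u = 0 := fun l hl => scaled_vanish hkv hl
  let k' : Ed d → ℝ := S (1 / 2) - S 2
  have hk' : IsTestFunction k' := (TF d).sub_mem (hS _ (by norm_num)) (hS _ (by norm_num))
  have hk'v : ∀ u, 1 < ‖u‖ → k' u = 0 := by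
    intro u hu
    simp only [k', Pi.sub_apply]
    rw [hSv _ (by norm_num) u (by linarith), hSv _ (by norm_num) u (by linarith), sub_zero]
  have hSc : ∀ l, 0 < l → ∀ n, ∀ A : ContinuousMultilinearMap ℝ (fun _ : Fin n => Ed d) ℝ,
      ∫ u, S l u * A (fun _ => u) = l ^ n * ∫ u, k u * A (fun _ => u) := by
    intro l hl n A
    rw [integral_scaled_s15 k (fun u => A (fun _ => u)) hl, ← integral_const_mul]
    congr 1
    ext u
    rw [ContinuousMultilinearMap.map_smul_univ A (fun _ => l) (fun _ => u)]
    simp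
    ring
  have hk'm : ∀ n < r, ∀ A : ContinuousMultilinearMap ℝ (fun _ : Fin n => Ed d) ℝ,
      ∫ u, k' u * A (fun _ => u) = 0 := by
    intro n hn A
    have hA : Continuous fun u : Ed d => A (fun _ => u) :=
      A.cont.comp (continuous_pi fun _ => continuous_id)
    simp only [k', Pi.sub_apply, sub_mul]
    rw [integral_sub ((hS _ (by norm_num)).integrable_mul hA)
      ((hS _ (by norm_num)).integrable_mul hA), hSc _ (by norm_num), hSc _ (by norm_num)]
    rcases Nat.eq_zero_or_pos n with rfl | hn0
    · simp
    · rw [hkm n hn0 hn A]; simp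
  have hk's : ∀ δ, scaled k' 0 δ = S (1 / 2 * δ) - S (2 * δ) := by
    intro δ
    have h1 : S (1 / 2 * δ) = scaled (S (1 / 2)) 0 δ := (scaled_zero_scaled k 0 (1 / 2) δ).symm
    have h2 : S (2 * δ) = scaled (S 2) 0 δ := (scaled_zero_scaled k 0 2 δ).symm
    rw [h1, h2]
    ext z
    simp only [scaled, k', Pi.sub_apply, mul_sub]
  let ρ : Ed d → ℝ := cv (S 2) (S 1)
  have hρ : IsTestFunction ρ := (hS _ (by norm_num)).cv' (hS _ (by norm_num))
  have hSi : ∀ l, 0 < l → ∫ u, S l u = 1 := by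
    intro l hl
    have := integral_scaled_s15 k (fun _ => 1) hl
    simp only [mul_one] at this
    rw [← hki, ← this]
  have hρi : ∫ u, ρ u = 1 := by
    have := integral_convolution (μ := (volume : Measure (Ed d))) (ν := volume)
      (ContinuousLinearMap.lsmul ℝ ℝ) (hS 2 (by norm_num)).integrable
      (hS 1 (by norm_num)).integrable
    rw [hSi _ (by norm_num), hSi _ (by norm_num)] at this
    simpa [ρ, cv] using this
  have hρs : ∀ δ, 0 < δ → scaled ρ 0 δ = cv (S (2 * δ)) (S δ) := by
    intro δ hδ
    have h1 : S δ = scaled (S 1) 0 δ := by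
      have := (scaled_zero_scaled k 0 1 δ).symm
      rwa [one_mul] at this
    have h2 : S (2 * δ) = scaled (S 2) 0 δ := (scaled_zero_scaled k 0 2 δ).symm
    rw [h1, h2, ← scaled_cv _ _ hδ]
  -- exchanging the two kernels
  have hex : ∀ ψ, IsTestFunction ψ → ∀ a b, 0 < a → 0 < b →
      cv (cv (S a) (S b)) ψ = cv (cv (S a) ψ) (S b) := by
    intro ψ hψ a b ha hb
    rw [cv_assoc (hS a ha) (hS b hb) hψ, cv_assoc (hS a ha) hψ (hS b hb), cv_comm (S b) ψ]
  let V : ℝ := volume.real (closedBall (0 : Ed d) 2)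
  let I2 : ℝ := ∫ u, |S 2 u|
  let I' : ℝ := ∫ u, |k' u|
  have hV : 0 ≤ V := measureReal_nonneg
  have hI2 : 0 ≤ I2 := integral_nonneg fun u => abs_nonneg _
  have hI' : 0 ≤ I' := integral_nonneg fun u => abs_nonneg _
  let q : ℝ := (1 / 2 : ℝ) ^ (-s) * (1 / 2 : ℝ) ^ r
  have hq0 : 0 ≤ q := by positivity
  have hq1 : q < 1 := by
    simp only [q]
    rw [← Real.rpow_natCast, ← Real.rpow_add (by norm_num)]
    exact Real.rpow_lt_one (by norm_num) (by norm_num) (by linarith)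
  refine ⟨I2 * V + I' * V * (1 - q)⁻¹, fun T hT M hM ψ hψ => ?_⟩
  have hM0 : 0 ≤ M := by
    have := hM 1 ⟨one_pos, le_rfl⟩ 0 (by simp)
    rw [Real.one_rpow, mul_one] at this
    exact (abs_nonneg _).trans this
  let A : ℕ → ℝ := fun n => T (cv (scaled ρ 0 ((1 / 2 : ℝ) ^ n)) ψ)
  have hA0 : |A 0| ≤ I2 * M * V := by
    have e : A 0 = T (cv (cv (S 2) ψ) (S 1)) := by
      simp only [A, pow_zero]
      rw [hρs 1 one_pos, mul_one, hex ψ hψ.1 2 1 (by norm_num) (by norm_num)]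
    rw [e]
    refine T_cv_bound T hT hk one_pos hI2 (fun y hy => ?_) ((hS 2 (by norm_num)).cv' hψ.1)
      (cv_vanish (hSv 2 (by norm_num)) hψ.vanish (by norm_num)) fun u => ?_
    · simpa using hM 1 ⟨one_pos, le_rfl⟩ y hy
    · have := cv_bound (hS 2 (by norm_num)) hψ.abs_le u
      rwa [mul_one] at this
  have hAd : ∀ n, |A (n + 1) - A n| ≤ I' * V * M * q ^ n := by
    intro n
    set δ : ℝ := (1 / 2 : ℝ) ^ n with hδd
    have hδ : 0 < δ := by positivity
    have hδ1 : δ ≤ 1 := pow_le_one₀ (by norm_num) (by norm_num)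
    have hh : 0 < 1 / 2 * δ := by positivity
    have h2 : 0 < 2 * δ := by positivity
    have e1 : A n = T (cv (cv (S (2 * δ)) ψ) (S δ)) := by
      simp only [A]
      rw [← hδd, hρs δ hδ, hex ψ hψ.1 _ _ h2 hδ]
    have e2 : A (n + 1) = T (cv (cv (S (1 / 2 * δ)) ψ) (S δ)) := by
      simp only [A]
      rw [pow_succ', ← hδd, hρs _ hh, cv_comm (S _) (S _), hex ψ hψ.1 _ _ hh (by positivity)]
      congr 3
      ring
    have e3 : A (n + 1) - A n = T (cv (cv (scaled k' 0 δ) ψ) (S δ)) := by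
      rw [e1, e2, ← map_sub, ← cv_sub_left ((hS _ hh).cv' hψ.1) ((hS _ h2).cv' hψ.1) (hS _ hδ),
        ← cv_sub_left (hS _ hh) (hS _ h2) hψ.1, ← hk's]
    rw [e3]
    have hb := T_cv_bound T hT hk hδ (B := I' * δ ^ r) (by positivity)
      (fun y hy => hM δ ⟨hδ, hδ1⟩ y hy)
      ((hk'.scaled 0 hδ.ne').cv' hψ.1)
      (cv_vanish (scaled_vanish hk'v hδ) hψ.vanish (by linarith)) 
      (fun u => taylor_cancel hr hk' hk'v hk'm hψ hδ u)
    refine hb.trans (le_of_eq ?_)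
    have e4 : δ ^ (-s) * δ ^ r = q ^ n := by
      simp only [q, mul_pow]
      rw [hδd, ← pow_mul, ← pow_mul, mul_comm n r, ← Real.rpow_natCast (1 / 2 : ℝ) n,
        ← Real.rpow_mul (by norm_num), ← Real.rpow_natCast ((1 / 2 : ℝ) ^ (-s)) n,
        ← Real.rpow_mul (by norm_num), mul_comm (n : ℝ)]
    rw [← e4]
    simp only [V]
    ring
  have hAn : ∀ n, |A n| ≤ I2 * M * V + I' * V * M * ∑ j ∈ Finset.range n, q ^ j := by
    intro n
    induction n with
    | zero => simpa using hA0
    | succ n ih =>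
      rw [Finset.sum_range_succ, mul_add]
      have h1 : |A (n + 1)| ≤ |A n| + |A (n + 1) - A n| := by
        have := abs_add_le (A n) (A (n + 1) - A n)
        rwa [add_sub_cancel] at this
      linarith [hAd n]
  have hlim := (T_approx T hT hρ hρi hψ.1).abs
  refine le_of_tendsto hlim (Eventually.of_forall fun n => ?_)
  refine (hAn n).trans ?_
  have hsum : ∑ j ∈ Finset.range n, q ^ j ≤ (1 - q)⁻¹ := by
    rw [← tsum_geometric_of_lt_one hq0 hq1]
    exact (summable_geometric_of_lt_one hq0 hq1).sum_le_tsum _ (fun j _ => by positivity)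
  calc _ ≤ I2 * M * V + I' * V * M * (1 - q)⁻¹ := by gcongr
    _ = _ := by ring


/-! ### The kernel with vanishing moments -/

lemma exists_coeffs (r : ℕ) (l0 : ℝ) (h0 : 0 < l0) : ∃ c lam : Fin r → ℝ,
    (∀ i, 0 < lam i ∧ lam i ≤ l0) ∧ (1 ≤ r → ∑ i, c i = 1) ∧
    ∀ n, 1 ≤ n → n < r → ∑ i, c i * lam i ^ n = 0 := by
  let lam : Fin r → ℝ := fun i => l0 / ((i : ℕ) + 1 : ℝ)
  have hinj : Function.Injective lam := by
    intro i j hij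
    simp only [lam] at hij
    rw [div_eq_div_iff (by positivity) (by positivity)] at hij
    have := mul_left_cancel₀ h0.ne' hij
    ext
    have h2 : ((j : ℕ) : ℝ) = (i : ℕ) := by linarith
    exact_mod_cast h2.symm
  let c : Fin r → ℝ := fun i => (Lagrange.basis Finset.univ lam i).eval 0
  have key : ∀ n, n < r → ∑ i, c i * lam i ^ n = (0 : ℝ) ^ n := by
    intro n hn
    have h := Lagrange.eq_interpolate (s := Finset.univ) (v := lam)
      (f := (Polynomial.X ^ n : Polynomial ℝ)) hinj.injOn (by
        rw [Polynomial.degree_X_pow]; simpa using hn)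
    have h2 := congrArg (Polynomial.eval 0) h
    rw [Lagrange.interpolate_apply, Polynomial.eval_finsetSum] at h2
    simp only [Polynomial.eval_mul, Polynomial.eval_C, Polynomial.eval_pow,
      Polynomial.eval_X] at h2
    rw [h2]
    exact Finset.sum_congr rfl fun i _ => mul_comm _ _
  refine ⟨c, lam, fun i => ⟨by positivity, ?_⟩, fun hr => ?_, fun n hn hnr => ?_⟩
  · exact div_le_self h0.le (by linarith [Nat.cast_nonneg (α := ℝ) (i : ℕ)])
  · have := key 0 hr
    simpa using this
  · rw [key n hnr, zero_pow (by omega)]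

lemma exists_kernel {d r : ℕ} (hr : 1 ≤ r) {φ : Ed d → ℝ} (hφ : IsTestFunction φ)
    (hφi : (∫ x, φ x) ≠ 0) : ∃ c lam : Fin r → ℝ, ∃ k : Ed d → ℝ,
    (∀ i, lam i ∈ Ioc (0 : ℝ) 1) ∧ k = ∑ i, c i • scaled φ 0 (lam i) ∧
    IsTestFunction k ∧ (∀ u, 1 / 2 < ‖u‖ → k u = 0) ∧ (∫ u, k u = 1) ∧
    (∀ n, 1 ≤ n → n < r → ∀ A : ContinuousMultilinearMap ℝ (fun _ : Fin n => Ed d) ℝ,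
      ∫ u, k u * A (fun _ => u) = 0) := by
  obtain ⟨R0, hR0⟩ := hφ.2.isCompact.isBounded.subset_closedBall (0 : Ed d)
  let R : ℝ := max R0 1
  have hR1 : 1 ≤ R := le_max_right _ _
  have hRv : ∀ u, R < ‖u‖ → φ u = 0 := by
    intro u hu
    by_contra h
    have := hR0 (subset_tsupport _ h)
    simp at this
    linarith [le_max_left R0 1]
  have hl0 : 0 < 1 / (2 * R) := by positivity
  obtain ⟨c, lam, hl, hc1, hcn⟩ := exists_coeffs r (1 / (2 * R)) hl0
  let c' : Fin r → ℝ := fun i => (∫ x, φ x)⁻¹ * c i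
  have hS : ∀ i, IsTestFunction (scaled φ 0 (lam i)) := fun i => hφ.scaled 0 (hl i).1.ne'
  have hmom : ∀ n, ∀ A : ContinuousMultilinearMap ℝ (fun _ : Fin n => Ed d) ℝ,
      ∫ u, (∑ i, c' i • scaled φ 0 (lam i)) u * A (fun _ => u) =
      (∫ x, φ x)⁻¹ * (∑ i, c i * lam i ^ n) * ∫ u, φ u * A (fun _ => u) := by
    intro n A
    have hA : Continuous fun u : Ed d => A (fun _ => u) :=
      A.cont.comp (continuous_pi fun _ => continuous_id)
    have hSc : ∀ i, ∫ u, scaled φ 0 (lam i) u * A (fun _ => u) =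
        lam i ^ n * ∫ u, φ u * A (fun _ => u) := by
      intro i
      rw [integral_scaled_s15 φ (fun u => A (fun _ => u)) (hl i).1, ← integral_const_mul]
      congr 1
      ext u
      rw [ContinuousMultilinearMap.map_smul_univ A (fun _ => lam i) (fun _ => u)]
      simp
      ring
    simp only [Finset.sum_apply, Pi.smul_apply, smul_eq_mul, Finset.sum_mul, mul_assoc]
    rw [integral_finsetSum]
    · simp only [integral_const_mul, hSc, Finset.mul_sum, c']
      exact Finset.sum_congr rfl fun i _ => by ring
    · intro i _
      exact ((hS i).integrable_mul hA).const_mul _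
  refine ⟨c', lam, _, fun i => ⟨(hl i).1, (hl i).2.trans ?_⟩, rfl, ?_, ?_, ?_, ?_⟩
  · rw [div_le_one (by positivity)]; linarith
  · exact (TF d).sum_mem fun i _ => (TF d).smul_mem _ (hS i)
  · intro u hu
    rw [Finset.sum_apply]
    refine Finset.sum_eq_zero fun i _ => ?_
    rw [Pi.smul_apply, scaled_vanish hRv (hl i).1 u, smul_zero]
    refine lt_of_le_of_lt ?_ hu
    calc lam i * R ≤ 1 / (2 * R) * R := by gcongr; exact (hl i).2
      _ = 1 / 2 := by field_simp
  · have h := hmom 0 (ContinuousMultilinearMap.constOfIsEmpty ℝ _ 1)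
    simp only [ContinuousMultilinearMap.constOfIsEmpty_apply, mul_one, pow_zero, hc1 hr] at h
    rw [h, inv_mul_cancel₀ hφi]
  · intro n hn hnr A
    rw [hmom, hcn n hn hnr, mul_zero, zero_mul]

/-! ### Rescaled distributions -/

/-- Rescaling as a linear map. -/
def scaleLM {d : ℕ} (x : Ed d) (l : ℝ) : (Ed d → ℝ) →ₗ[ℝ] (Ed d → ℝ) where
  toFun f := scaled f x l
  map_add' f g := by ext z; simp only [scaled, Pi.add_apply, mul_add]
  map_smul' c f := by
    ext z; simp only [scaled, Pi.smul_apply, smul_eq_mul, RingHom.id_apply]; ring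

lemma scaleLM_apply {d : ℕ} (x : Ed d) (l : ℝ) (f : Ed d → ℝ) :
    scaleLM x l f = scaled f x l := rfl

lemma le_Cnorm {d r : ℕ} {ψ : Ed d → ℝ} (hψ : IsTestFunction ψ) (i : ℕ) (hi : i ≤ r) (x : Ed d) :
    ‖iteratedFDeriv ℝ i ψ x‖ ≤ Cnorm r ψ := by
  unfold Cnorm
  have h1 : BddAbove (range fun x => ‖iteratedFDeriv ℝ i ψ x‖) := by
    obtain ⟨C, hC⟩ := hψ.bdd_iter i
    exact ⟨C, by rintro _ ⟨x, rfl⟩; exact hC x⟩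
  refine (le_ciSup h1 x).trans ?_
  exact le_ciSup (f := fun i : Fin (r + 1) => ⨆ x : Ed d, ‖iteratedFDeriv ℝ (i : ℕ) ψ x‖)
    (Set.finite_range _).bddAbove (⟨i, by omega⟩ : Fin (r + 1))

lemma Cnorm_nonneg {d r : ℕ} {ψ : Ed d → ℝ} (hψ : IsTestFunction ψ) : 0 ≤ Cnorm r ψ :=
  (norm_nonneg _).trans (le_Cnorm hψ 0 (Nat.zero_le _) 0)

lemma Cnorm_scaled {d m : ℕ} {f : Ed d → ℝ} (hf : IsTestFunction f) (x : Ed d) {l : ℝ}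
    (hl : 0 < l) (hl1 : l ≤ 1) :
    Cnorm m (scaled f x l) ≤ (l ^ d)⁻¹ * l⁻¹ ^ m * Cnorm m f := by
  rw [Cnorm]
  refine ciSup_le fun i => ciSup_le fun z => ?_
  have hfi : ContDiff ℝ (i : ℕ) f := hf.1.of_le (by exact_mod_cast le_top)
  have e : iteratedFDeriv ℝ (i : ℕ) (scaled f x l) z =
      (l ^ d)⁻¹ • (l⁻¹ ^ (i : ℕ) • iteratedFDeriv ℝ (i : ℕ) f (l⁻¹ • (z - x))) := by
    have h1 : scaled f x l = fun w => (fun w' => (l ^ d)⁻¹ • f (l⁻¹ • w')) (w - x) := by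
      ext w; simp [scaled]
    have h2 : ContDiff ℝ (i : ℕ) (fun w' => f (l⁻¹ • w')) := hfi.comp (contDiff_id.const_smul _)
    rw [h1, iteratedFDeriv_comp_sub (f := fun w' => (l ^ d)⁻¹ • f (l⁻¹ • w')), iteratedFDeriv_const_smul_apply' h2.contDiffAt,
      iteratedFDeriv_comp_const_smul _ hfi]
  rw [e, norm_smul, norm_smul, mul_assoc, Real.norm_of_nonneg (by positivity),
    Real.norm_of_nonneg (by positivity)]
  have h3 : l⁻¹ ^ (i : ℕ) ≤ l⁻¹ ^ m :=
    pow_le_pow_right₀ ((one_le_inv₀ hl).2 hl1) (by omega)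
  have h4 := le_Cnorm hf (i : ℕ) (by omega : (i : ℕ) ≤ m) (l⁻¹ • (z - x))
  gcongr

lemma IsDistribution.rescale {d : ℕ} {T : (Ed d → ℝ) →ₗ[ℝ] ℝ} (hT : IsDistribution T) (x : Ed d)
    {l : ℝ} (hl : 0 < l) (hl1 : l ≤ 1) : IsDistribution (T ∘ₗ scaleLM x l) := by
  intro K hK
  have hK' : IsCompact ((fun u => x + l • u) '' K) := hK.image (by fun_prop)
  obtain ⟨m, C, hC⟩ := hT _ hK'
  refine ⟨m, |C| * ((l ^ d)⁻¹ * l⁻¹ ^ m), fun f hf hfK => ?_⟩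
  have hs := hf.scaled x hl.ne'
  have hsub : tsupport (scaled f x l) ⊆ (fun u => x + l • u) '' K := by
    refine closure_minimal (fun z hz => ?_) hK'.isClosed
    refine ⟨l⁻¹ • (z - x), hfK (subset_tsupport _ ?_), ?_⟩
    · intro h0
      apply hz
      simp [scaled, h0]
    · simp only [smul_smul, mul_inv_cancel₀ hl.ne', one_smul, add_sub_cancel]
  have h1 := hC _ hs hsub
  rw [LinearMap.comp_apply, scaleLM_apply, mul_assoc]
  refine h1.trans ?_
  have h0 : 0 ≤ Cnorm m (scaled f x l) := Cnorm_nonneg hs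
  have h2 := Cnorm_scaled (m := m) hf x hl hl1
  calc C * Cnorm m (scaled f x l) ≤ |C| * Cnorm m (scaled f x l) := by
        gcongr; exact le_abs_self C
    _ ≤ _ := by gcongr

/-! ### Elementary power estimates -/

lemma power_bound {a b γ s C1 C2 l δ ε n : ℝ} (haγ : a ≤ γ) (hb : b < γ)
    (has : -s ≤ a) (hbs : -s ≤ b) (hl : l ∈ Ioc (0 : ℝ) 1) (hδ : δ ∈ Ioc (0 : ℝ) 1)
    (hε : ε ∈ Ioc (0 : ℝ) 1) (hn0 : 0 ≤ n) (hn : n ≤ 2 * ε) :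
    C1 * (l * δ * ε) ^ b + C2 * (l * δ * ε) ^ a * (n + l * δ * ε) ^ (γ - a) ≤
      (|C1| * l ^ b + |C2| * l ^ a * 3 ^ (γ - a)) * ε ^ b * δ ^ (-s) := by
  obtain ⟨hl0, hl1⟩ := hl
  obtain ⟨hδ0, hδ1⟩ := hδ
  obtain ⟨hε0, hε1⟩ := hε
  have hpow : ∀ p : ℝ, (l * δ * ε) ^ p = l ^ p * δ ^ p * ε ^ p := by
    intro p
    rw [Real.mul_rpow (by positivity) hε0.le, Real.mul_rpow hl0.le hδ0.le]
  have hda : δ ^ a ≤ δ ^ (-s) := Real.rpow_le_rpow_of_exponent_ge hδ0 hδ1 has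
  have hdb : δ ^ b ≤ δ ^ (-s) := Real.rpow_le_rpow_of_exponent_ge hδ0 hδ1 hbs
  have h1 : C1 * (l * δ * ε) ^ b ≤ |C1| * l ^ b * ε ^ b * δ ^ (-s) := by
    rw [hpow]
    calc C1 * (l ^ b * δ ^ b * ε ^ b) ≤ |C1| * (l ^ b * δ ^ (-s) * ε ^ b) := by
          gcongr; exact le_abs_self _
      _ = _ := by ring
  have h2 : (n + l * δ * ε) ^ (γ - a) ≤ 3 ^ (γ - a) * ε ^ (γ - a) := by
    rw [← Real.mul_rpow (by norm_num) hε0.le]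
    refine Real.rpow_le_rpow (by positivity) ?_ (by linarith)
    have : l * δ ≤ 1 := mul_le_one₀ hl1 hδ0.le hδ1
    nlinarith
  have h3 : ε ^ a * ε ^ (γ - a) ≤ ε ^ b := by
    rw [← Real.rpow_add hε0, add_sub_cancel]
    exact Real.rpow_le_rpow_of_exponent_ge hε0 hε1 hb.le
  have h4 : C2 * (l * δ * ε) ^ a * (n + l * δ * ε) ^ (γ - a) ≤
      |C2| * l ^ a * 3 ^ (γ - a) * ε ^ b * δ ^ (-s) := by
    rw [hpow]
    calc C2 * (l ^ a * δ ^ a * ε ^ a) * (n + l * δ * ε) ^ (γ - a)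
        ≤ |C2| * (l ^ a * δ ^ (-s) * ε ^ a) * (3 ^ (γ - a) * ε ^ (γ - a)) := by
          gcongr; exact le_abs_self _
      _ = |C2| * l ^ a * 3 ^ (γ - a) * δ ^ (-s) * (ε ^ a * ε ^ (γ - a)) := by ring
      _ ≤ |C2| * l ^ a * 3 ^ (γ - a) * δ ^ (-s) * ε ^ b := by gcongr
      _ = _ := by ring
  linarith

/-- Enhanced local homogeneity: the homogeneity bound holds uniformly
over all normalized test functions, with exponent `β' = β_{K̄₂}`. -/
theorem stmt15 {d : ℕ} (γ : ℝ) (F : Ed d → ((Ed d → ℝ) →ₗ[ℝ] ℝ)) (hF : IsGerm F)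
    (φ : Ed d → ℝ) (hφ : IsTestFunction φ) (hφi : (∫ x, φ x) ≠ 0)
    (αf βf : Set (Ed d) → ℝ) (hcoh : GammaCoherentFam γ F φ αf)
    (hhom : ∀ K : Set (Ed d), IsCompact K → βf K < γ ∧ ∃ C : ℝ,
      ∀ x ∈ K, ∀ ε ∈ Set.Ioc (0:ℝ) 1, |F x (scaled φ x ε)| ≤ C * ε ^ (βf K)) :
    ∀ K : Set (Ed d), IsCompact K → ∀ r : ℕ,
      (r : ℝ) > max (-(αf (cthickening 2 K))) (-(βf (cthickening 2 K))) →
      ∃ C : ℝ, ∀ x ∈ K, ∀ ε ∈ Set.Ioc (0:ℝ) 1, ∀ ψ : Ed d → ℝ, Br r ψ →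
        |F x (scaled ψ x ε)| ≤ C * ε ^ (βf (cthickening 2 K)) := by
  intro K hK r hr
  have hK' : IsCompact (cthickening 2 K) := hK.cthickening
  obtain ⟨hα, C2, hC2⟩ := hcoh _ hK'
  obtain ⟨hβ, C1, hC1⟩ := hhom _ hK'
  set K' := cthickening 2 K with hKd
  set a := αf K'
  set b := βf K'
  set s := max (-a) (-b) with hsd
  have ha0 : a ≤ 0 := hα.trans (min_le_left _ _)
  have haγ : a ≤ γ := hα.trans (min_le_right _ _)
  have has : -s ≤ a := by linarith [le_max_left (-a) (-b)]
  have hbs : -s ≤ b := by linarith [le_max_right (-a) (-b)]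
  have hr1 : 1 ≤ r := by
    have : (0 : ℝ) < r := by linarith
    exact_mod_cast this
  obtain ⟨c, lam, k, hlam, hkd, hk, hkv, hki, hkm⟩ := exists_kernel (r := r) hr1 hφ hφi
  obtain ⟨C, hC⟩ := key_estimate hr1 (s := s) hr hk hkv hki hkm
  let D : ℝ := ∑ i, |c i| * (|C1| * lam i ^ b + |C2| * lam i ^ a * 3 ^ (γ - a))
  refine ⟨C * D, fun x hx ε hε ψ hψ => ?_⟩
  rw [mul_assoc]
  refine hC _ ((hF.1 x).rescale x hε.1 hε.2) _ (fun δ hδ y hy => ?_) ψ hψ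
  have e : scaled (scaled k y δ) x ε =
      ∑ i, c i • scaled φ (x + ε • y) (lam i * δ * ε) := by
    have e1 : scaled k y δ = scaleLM y δ k := rfl
    have e2 : scaled (scaleLM y δ k) x ε = scaleLM x ε (scaleLM y δ k) := rfl
    rw [e1, e2, hkd, map_sum, map_sum]
    refine Finset.sum_congr rfl fun i _ => ?_
    rw [map_smul, map_smul, scaleLM_apply, scaleLM_apply, scaled_zero_scaled,
      scaled_scaled _ _ _ _ _ hε.1.ne']
  rw [LinearMap.comp_apply, scaleLM_apply, e, map_sum]
  refine (Finset.abs_sum_le_sum_abs _ _).trans ?_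
  simp only [D, Finset.sum_mul]
  refine Finset.sum_le_sum fun i _ => ?_
  rw [map_smul, smul_eq_mul, abs_mul, mul_assoc (|c i| * _), mul_assoc |c i|]
  refine mul_le_mul_of_nonneg_left ?_ (abs_nonneg _)
  rw [← mul_assoc]
  have hn : ‖x - (x + ε • y)‖ ≤ 2 * ε := by
    rw [sub_add_cancel_left, norm_neg, norm_smul, Real.norm_of_nonneg hε.1.le, mul_comm]
    exact mul_le_mul_of_nonneg_right hy hε.1.le
  have hxK : x ∈ K' := self_subset_cthickening K hx
  have hzK : x + ε • y ∈ K' := by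
    refine mem_cthickening_of_dist_le _ x 2 K hx ?_
    rw [dist_comm, dist_eq_norm]
    linarith [hε.2]
  have hle : lam i * δ * ε ∈ Ioc (0 : ℝ) 1 := by
    have := (hlam i).1
    have := hδ.1
    have := hε.1
    refine ⟨by positivity, mul_le_one₀ (mul_le_one₀ (hlam i).2 hδ.1.le hδ.2) hε.1.le hε.2⟩
  have h1 := hC1 _ hzK _ hle
  have h2 := hC2 _ hzK _ hxK _ hle
  have h3 := power_bound (C1 := C1) (C2 := C2) haγ hβ has hbs (hlam i) hδ hε (norm_nonneg _) hn
  refine le_trans ?_ h3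
  refine le_trans ?_ (add_le_add (α := ℝ) h1 h2)
  have := abs_add_le (F (x + ε • y) (scaled φ (x + ε • y) (lam i * δ * ε)))
    (F x (scaled φ (x + ε • y) (lam i * δ * ε)) -
      F (x + ε • y) (scaled φ (x + ε • y) (lam i * δ * ε)))
  rwa [add_sub_cancel] at this
end
end
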